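/- Let D ⊆ ℝ[X₁,…,Xₙ]\{0} be a multiplicatively closed set with 1 ∈ D, let E = D⁻¹ℝ[X₁,…,Xₙ], and let S = {g₁,…,g_m} ⊆ ℝ[X₁,…,Xₙ] be a finite set with K_S ≠ ∅. Assume there exist p ∈ D and an integer k ≥ 1 such that p(a) ≥ 1 for all a ∈ K_S and k·p(a) − (a₁²+⋯+aₙ²) ≥ 0 for all a ∈ K_S. Then the closure of T_S^E in the finest locally convex topology on E equals Pos^E(K_S \ ⋃_{d∈D} Z(d)); equivalently, an element R ∈ E satisfies L(R) ≥ 0 for every linear functional L on E with L(T_S^E) ⊆ [0,∞) if and only if R ⪰ 0 on K_S \ ⋃_{d∈D} Z(d). -/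

import Mathlib

/-!
The inclusion from left to right is tested by evaluation at the points of `K_S` where no denominator
vanishes; such evaluations are functionals on the localization that are nonnegative on `T_S^E`.

For the converse let `L ≥ 0` on `T_S^E`.

1. *Positivstellensatz* (`positivstellensatz`). A proper preordering of `ℝ[X]` extends to an ordering
   of a residue field, which embeds into an ordered field with the intermediate value property for
   polynomials. A solution of `g ≥ 0` there is carried to `ℝ`: sign-preserving partial isomorphisms
   extend to further elements after passing to ultrapowers, and solvability descends from
   ultrapowers.
2. *Nonnegativity on `K_S`* (`functional_nonneg`). If `f ≥ 0` on `K_S`, then `L (f e²) ≥ 0` for every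
   `e` in the localization. The growth condition lets a power of the unit `p` dominate `f`, and a
   convexity argument on the moments of the normalized `f` removes the denominators from the
   Positivstellensatz certificates.
3. *Representing measure* (`exists_measure`). The Riesz extension theorem extends `L` to
   `E × C_c(ℝⁿ)`, positively with respect to pointwise nonnegativity on `K_S`; Riesz–Markov–Kakutani
   yields a measure `μ` on `ℝⁿ` with `∫ ψ dμ ≤ L e` whenever the fraction `e` dominates `ψ` on `K_S`.
4. *The zeros of the denominators are null* (`functional_nonneg_off_zeros`). If `d(a) = 0`, then
   comparison with a multiple of `d^(-2(n+1))` gives `μ (B(a, r)) ≤ c r^(2(n+1))`. Since this is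
   `o(rⁿ)`, Besicovitch differentiation against Lebesgue measure shows that the set of all such `a`
   is `μ`-null, although the union over `d` may be uncountable. So `f ≥ 0` holds `μ`-almost
   everywhere as soon as it holds on `K_S` off the zeros, and truncating `f` gives `L f ≥ 0`.

For `R = f / d` the last step is applied to the polynomial `f d` and the functional
`e ↦ L (e / d²)`.
-/

open MvPolynomial MeasureTheory

noncomputable section

/-- The Euclidean (weak) topology on a real vector space; for finite-dimensional
spaces this is the usual Euclidean topology. -/
def weakTop (V : Type*) [AddCommGroup V] [Module ℝ V] : TopologicalSpace V :=
  ⨅ L : V →ₗ[ℝ] ℝ, TopologicalSpace.induced L inferInstance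

/-- The topology of finitely open sets: `O` is open iff its intersection with every
finite-dimensional subspace `U` is open in the Euclidean topology of `U`. -/
def finTop (E : Type*) [AddCommGroup E] [Module ℝ E] : TopologicalSpace E where
  IsOpen O := ∀ U : Submodule ℝ E, FiniteDimensional ℝ U →
    @IsOpen _ (weakTop U) ((Subtype.val : U → E) ⁻¹' O)
  isOpen_univ := by
    intro U _
    letI := weakTop U
    rw [Set.preimage_univ]
    exact isOpen_univ
  isOpen_inter := by
    intro s t hs ht U hU
    letI := weakTop U
    rw [Set.preimage_inter]
    exact (hs U hU).inter (ht U hU)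
  isOpen_sUnion := by
    intro s hs U hU
    letI := weakTop U
    rw [Set.preimage_sUnion]
    exact isOpen_biUnion fun t ht => hs t ht U hU

/-- The closure of a convex cone in the finest locally convex topology, via the dual
characterization: `x` lies in the closure iff `L x ≥ 0` for every linear functional `L`
nonnegative on the cone. -/
def dualClosure {E : Type*} [AddCommGroup E] [Module ℝ E] (C : Set E) : Set E :=
  {x | ∀ L : E →ₗ[ℝ] ℝ, (∀ c ∈ C, 0 ≤ L c) → 0 ≤ L x}

/-- The preordering generated by `g 1, …, g m` in a commutative ring: all finite sums
of elements `σ • g₁^ν₁ ⋯ g_m^ν_m` with `σ` a sum of squares and `ν ∈ {0,1}^m`. -/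
def genPreordering {E : Type*} [CommRing E] {m : ℕ} (g : Fin m → E) : Set E :=
  {x | ∃ σ : (Fin m → Bool) → E, (∀ ν, IsSumSq (σ ν)) ∧
    x = ∑ ν : Fin m → Bool, σ ν * ∏ j, (if ν j then g j else 1)}

/-- The basic closed semialgebraic set determined by `g 1, …, g m`. -/
def KS {n m : ℕ} (g : Fin m → MvPolynomial (Fin n) ℝ) : Set (Fin n → ℝ) :=
  {x | ∀ i, 0 ≤ eval x (g i)}

/-- The real zero set of a polynomial. -/
def Zset {n : ℕ} (d : MvPolynomial (Fin n) ℝ) : Set (Fin n → ℝ) :=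
  {x | eval x d = 0}

/-- `Pos^E(𝒳)`: elements of the localization having a representation `f/d` with
`f·d ≥ 0 pointwise on 𝒳`. -/
def PosE {n : ℕ} (D : Submonoid (MvPolynomial (Fin n) ℝ)) (X : Set (Fin n → ℝ)) :
    Set (Localization D) :=
  {R | ∃ (f : MvPolynomial (Fin n) ℝ) (d : D), R = Localization.mk f d ∧
    ∀ x ∈ X, 0 ≤ eval x f * eval x (d : MvPolynomial (Fin n) ℝ)}

/-! ### Orderings from preorderings -/

/-- The subsemiring `T + xT` obtained by adjoining `x` to a subsemiring `T` containing all
squares. -/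
def adjoinCone {A : Type*} [CommRing A] (T : Subsemiring A) (hsq : ∀ a : A, a * a ∈ T) (x : A) :
    Subsemiring A where
  carrier := {z | ∃ a ∈ T, ∃ b ∈ T, z = a + x * b}
  zero_mem' := ⟨0, T.zero_mem, 0, T.zero_mem, by simp⟩
  one_mem' := ⟨1, T.one_mem, 0, T.zero_mem, by simp⟩
  add_mem' := by
    rintro _ _ ⟨a, ha, b, hb, rfl⟩ ⟨c, hc, d, hd, rfl⟩
    exact ⟨a + c, T.add_mem ha hc, b + d, T.add_mem hb hd, by ring⟩
  mul_mem' := by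
    rintro _ _ ⟨a, ha, b, hb, rfl⟩ ⟨c, hc, d, hd, rfl⟩
    exact ⟨a * c + (x * x) * (b * d),
      T.add_mem (T.mul_mem ha hc) (T.mul_mem (hsq x) (T.mul_mem hb hd)),
      a * d + b * c, T.add_mem (T.mul_mem ha hd) (T.mul_mem hb hc), by ring⟩

lemma le_adjoinCone {A : Type*} [CommRing A] (T : Subsemiring A) (hsq : ∀ a : A, a * a ∈ T)
    (x : A) : T ≤ adjoinCone T hsq x :=
  fun a ha => ⟨a, ha, 0, T.zero_mem, by simp⟩

lemma mem_adjoinCone_self {A : Type*} [CommRing A] (T : Subsemiring A)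
    (hsq : ∀ a : A, a * a ∈ T) (x : A) : x ∈ adjoinCone T hsq x :=
  ⟨0, T.zero_mem, 1, T.one_mem, by simp⟩

/-- A proper preordering is contained in one that cannot be enlarged without acquiring `-1`. -/
lemma exists_maximal_cone {A : Type*} [CommRing A] (T : Subsemiring A)
    (hsq : ∀ a : A, a * a ∈ T) (hT : (-1 : A) ∉ T) :
    ∃ P : Subsemiring A, T ≤ P ∧ (-1 : A) ∉ P ∧
      ∀ x ∉ P, ∃ a ∈ P, ∃ b ∈ P, (-1 : A) = a + x * b := by
  obtain ⟨P, hTP, hP⟩ := zorn_le_nonempty₀ {P : Subsemiring A | (-1 : A) ∉ P ∧ T ≤ P} (by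
    intro c hc hchain y hy
    refine ⟨sSup c, ⟨?_, (hc hy).2.trans (le_sSup hy)⟩, fun z hz => le_sSup hz⟩
    rw [Subsemiring.mem_sSup_of_directedOn ⟨y, hy⟩ hchain.directedOn]
    rintro ⟨s, hs, h⟩
    exact (hc hs).1 h) T ⟨hT, le_rfl⟩
  have hsqP : ∀ a : A, a * a ∈ P := fun a => hTP (hsq a)
  refine ⟨P, hTP, hP.prop.1, fun x hx => ?_⟩
  by_contra hcon
  have h1 : (-1 : A) ∉ adjoinCone P hsqP x := fun h => hcon h
  have := hP.le_of_ge (y := adjoinCone P hsqP x) ⟨h1, hTP.trans (le_adjoinCone _ _ _)⟩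
    (le_adjoinCone _ _ _)
  exact hx (this (mem_adjoinCone_self _ _ _))

lemma maximal_cone_total {A : Type*} [CommRing A] (P : Subsemiring A)
    (hsq : ∀ a : A, a * a ∈ P) (hP : (-1 : A) ∉ P)
    (hmax : ∀ x ∉ P, ∃ a ∈ P, ∃ b ∈ P, (-1 : A) = a + x * b) (x : A) : x ∈ P ∨ -x ∈ P := by
  by_contra! h
  obtain ⟨a, ha, b, hb, h1⟩ := hmax x h.1
  obtain ⟨c, hc, d, hd, h2⟩ := hmax (-x) h.2
  apply hP
  have : (-1 : A) = (x * x) * (b * d) + a + c + a * c := by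
    linear_combination (1 + c) * h1 + (-x * b) * h2
  rw [this]
  exact P.add_mem (P.add_mem (P.add_mem (P.mul_mem (hsq x) (P.mul_mem hb hd)) ha) hc)
    (P.mul_mem ha hc)

/-- The support `P ∩ -P` of a total cone. -/
def coneSupport {A : Type*} [CommRing A] (P : Subsemiring A)
    (htot : ∀ x, x ∈ P ∨ -x ∈ P) : Ideal A where
  carrier := {x | x ∈ P ∧ -x ∈ P}
  zero_mem' := by simp [P.zero_mem]
  add_mem' := by
    rintro a b ⟨ha, ha'⟩ ⟨hb, hb'⟩
    exact ⟨P.add_mem ha hb, by rw [neg_add]; exact P.add_mem ha' hb'⟩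
  smul_mem' := by
    rintro c x ⟨hx, hx'⟩
    rcases htot c with h | h
    · exact ⟨P.mul_mem h hx, by simpa using P.mul_mem h hx'⟩
    · exact ⟨by simpa using P.mul_mem h hx', by simpa using P.mul_mem h hx⟩

lemma coneSupport_isPrime {A : Type*} [CommRing A] (P : Subsemiring A)
    (hP : (-1 : A) ∉ P)
    (hmax : ∀ x ∉ P, ∃ a ∈ P, ∃ b ∈ P, (-1 : A) = a + x * b)
    (htot : ∀ x, x ∈ P ∨ -x ∈ P) : (coneSupport P htot).IsPrime := by
  -- by maximality, an element outside the support divides some `1 + a` with `a ∈ P`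
  have key : ∀ x ∉ coneSupport P htot, ∃ a ∈ P, ∃ b, x * b = 1 + a := by
    intro x hx
    have : x ∉ P ∨ -x ∉ P := by
      by_contra! h
      exact hx h
    rcases this with h | h
    · obtain ⟨a, ha, b, hb, h1⟩ := hmax x h
      exact ⟨a, ha, -b, by linear_combination h1⟩
    · obtain ⟨a, ha, b, hb, h1⟩ := hmax (-x) h
      exact ⟨a, ha, b, by linear_combination h1⟩
  constructor
  · intro h
    have : (1 : A) ∈ coneSupport P htot := h ▸ Submodule.mem_top
    exact hP this.2
  · intro x y hxy
    by_contra! h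
    obtain ⟨a, ha, b, h1⟩ := key x h.1
    obtain ⟨c, hc, d, h2⟩ := key y h.2
    have h3 : (1 + a) * (1 + c) ∈ coneSupport P htot := by
      rw [← h1, ← h2]
      have := (coneSupport P htot).mul_mem_right (b * d) hxy
      convert this using 1; ring
    apply hP
    have h4 : (-1 : A) = -((1 + a) * (1 + c)) + (a + c + a * c) := by ring
    rw [h4]
    exact P.add_mem h3.2 (P.add_mem (P.add_mem ha hc) (P.mul_mem ha hc))

/-- A total cone with trivial support on a field is the set of nonnegative elements of a field
ordering. -/
lemma exists_order_of_cone {L : Type*} [Field L] (P : Subsemiring L)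
    (hz : ∀ x, x ∈ P → -x ∈ P → x = 0) (htot : ∀ x, x ∈ P ∨ -x ∈ P) :
    ∃ (_ : LinearOrder L) (_ : IsStrictOrderedRing L), ∀ x : L, 0 ≤ x ↔ x ∈ P := by
  classical
  let C : RingCone L := { P with eq_zero_of_mem_of_neg_mem' := fun {x} h h' => hz x h h' }
  have : HasMemOrNegMem C := ⟨fun x => htot x⟩
  let o : LinearOrder L := LinearOrder.mkOfAddGroupCone C
  have h1 : IsOrderedRing L := IsOrderedRing.mkOfCone C
  have h2 : IsStrictOrderedRing L := IsOrderedRing.toIsStrictOrderedRing L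
  refine ⟨o, h2, fun x => ?_⟩
  change x - 0 ∈ P ↔ x ∈ P
  simp

/-- The preordering of `L` generated by the image of a cone of `A`. -/
def pushCone {A L : Type*} [CommRing A] [CommRing L] (φ : A →+* L) (P : Subsemiring A) :
    Subsemiring L where
  __ := AddSubmonoid.closure {z | ∃ p ∈ P, ∃ y : L, z = φ p * (y * y)}
  one_mem' := AddSubmonoid.subset_closure ⟨1, P.one_mem, 1, by simp⟩
  mul_mem' := by
    intro a b ha hb
    change a * b ∈ AddSubmonoid.closure _
    refine AddSubmonoid.closure_induction₂ (motive := fun a b _ _ => a * b ∈ AddSubmonoid.closure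
      {z | ∃ p ∈ P, ∃ y : L, z = φ p * (y * y)}) ?_ ?_ ?_ ?_ ?_ ha hb
    · rintro _ _ ⟨p, hp, y, rfl⟩ ⟨q, hq, z, rfl⟩
      exact AddSubmonoid.subset_closure ⟨p * q, P.mul_mem hp hq, y * z, by rw [map_mul]; ring⟩
    · intro x _; simp
    · intro x _; simp
    · intro x y z _ _ _ h1 h2; rw [add_mul]; exact add_mem h1 h2
    · intro x y z _ _ _ h1 h2; rw [mul_add]; exact add_mem h1 h2

lemma mem_pushCone {A L : Type*} [CommRing A] [CommRing L] {φ : A →+* L} {P : Subsemiring A}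
    {z : L} : z ∈ pushCone φ P ↔
      z ∈ AddSubmonoid.closure {z | ∃ p ∈ P, ∃ y : L, z = φ p * (y * y)} := Iff.rfl

/-- If `-1` is not of the form `∑ φ(pᵢ) yᵢ²` with `pᵢ ∈ P`, the field `L` has an ordering in
which all of `φ(P)` is nonnegative. -/
lemma exists_order_of_pushCone {A L : Type*} [CommRing A] [Field L] (φ : A →+* L)
    (P : Subsemiring A) (h : (-1 : L) ∉ pushCone φ P) :
    ∃ (_ : LinearOrder L) (_ : IsStrictOrderedRing L), ∀ p ∈ P, 0 ≤ φ p := by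
  have hsq : ∀ a : L, a * a ∈ pushCone φ P := fun a =>
    AddSubmonoid.subset_closure ⟨1, P.one_mem, a, by simp⟩
  obtain ⟨Q, hle, hQ, hmax⟩ := exists_maximal_cone _ hsq h
  have hsqQ : ∀ a : L, a * a ∈ Q := fun a => hle (hsq a)
  have htot := maximal_cone_total Q hsqQ hQ hmax
  obtain ⟨o, ho, hiff⟩ := exists_order_of_cone Q (by
    intro x hx hx'
    by_contra hne
    apply hQ
    have : (-1 : L) = x * (-x) * (x⁻¹ * x⁻¹) := by field_simp
    rw [this]
    exact Q.mul_mem (Q.mul_mem hx hx') (hsqQ _)) htot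
  exact ⟨o, ho, fun p hp => (hiff _).2 (hle
    (AddSubmonoid.subset_closure ⟨p, hp, 1, by simp⟩))⟩

/-- A proper preordering of a ring becomes nonnegative in some ordered field over the ring. -/
lemma exists_ordered_field {A : Type} [CommRing A] (T : Subsemiring A)
    (hsq : ∀ a : A, a * a ∈ T) (hT : (-1 : A) ∉ T) :
    ∃ (F : Type) (_ : Field F) (_ : LinearOrder F) (_ : IsStrictOrderedRing F) (φ : A →+* F),
      ∀ t ∈ T, 0 ≤ φ t := by
  obtain ⟨P, hTP, hP, hmax⟩ := exists_maximal_cone T hsq hT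
  have hsqP : ∀ a : A, a * a ∈ P := fun a => hTP (hsq a)
  have htot := maximal_cone_total P hsqP hP hmax
  have hprime := coneSupport_isPrime P hP hmax htot
  set Q := coneSupport P htot with hQ
  let F := FractionRing (A ⧸ Q)
  let φ : A →+* F := (algebraMap (A ⧸ Q) F).comp (Ideal.Quotient.mk Q)
  have hφ : ∀ a, φ a = 0 ↔ a ∈ Q := by
    intro a
    rw [← Ideal.Quotient.eq_zero_iff_mem]
    exact map_eq_zero_iff _ (IsFractionRing.injective (A ⧸ Q) F)
  have hfrac : ∀ y : F, ∃ a b : A, b ∉ Q ∧ y * φ b = φ a := by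
    intro y
    obtain ⟨⟨a, b⟩, h⟩ := IsLocalization.surj (nonZeroDivisors (A ⧸ Q)) y
    obtain ⟨a, rfl⟩ := Ideal.Quotient.mk_surjective a
    obtain ⟨b', hb'⟩ := Ideal.Quotient.mk_surjective (b : A ⧸ Q)
    refine ⟨a, b', fun hmem => ?_, ?_⟩
    · have : (b : A ⧸ Q) = 0 := by rw [← hb']; exact Ideal.Quotient.eq_zero_iff_mem.2 hmem
      exact nonZeroDivisors.coe_ne_zero b this
    · simpa [φ, hb'] using h
  obtain ⟨o, ho, h⟩ := exists_order_of_pushCone φ P (by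
    have key : ∀ z ∈ pushCone φ P, ∃ p ∈ P, ∃ b ∉ Q, z * (φ b * φ b) = φ p := by
      intro z hz
      refine AddSubmonoid.closure_induction
        (motive := fun z _ => ∃ p ∈ P, ∃ b ∉ Q, z * (φ b * φ b) = φ p) ?_ ?_ ?_ hz
      · rintro _ ⟨p, hp, y, rfl⟩
        obtain ⟨a, b, hb, hab⟩ := hfrac y
        refine ⟨p * (a * a), P.mul_mem hp (hsqP a), b, hb, ?_⟩
        rw [map_mul, map_mul, ← hab]; ring
      · exact ⟨0, P.zero_mem, 1, fun h => hprime.ne_top ((Ideal.eq_top_iff_one _).2 h), by simp⟩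
      · rintro x y _ _ ⟨p, hp, b, hb, h1⟩ ⟨q, hq, c, hc, h2⟩
        refine ⟨p * (c * c) + q * (b * b), P.add_mem (P.mul_mem hp (hsqP c))
          (P.mul_mem hq (hsqP b)), b * c, fun h => (hprime.mem_or_mem h).elim hb hc, ?_⟩
        simp only [map_add, map_mul]; rw [← h1, ← h2]; ring
    intro hneg
    obtain ⟨p, hp, b, hb, h⟩ := key _ hneg
    have h0 : φ (p + b * b) = 0 := by rw [map_add, map_mul, ← h]; ring
    have h1 := (hφ _).1 h0
    have h2 : b * b ∈ Q := ⟨hsqP b, by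
      have := P.add_mem hp h1.2
      convert this using 1; ring⟩
    exact hb ((hprime.mem_or_mem h2).elim id id))
  exact ⟨F, inferInstance, o, ho, φ, fun t ht => h t (hTP ht)⟩

/-! ### Extending orderings to fields with the intermediate value property -/

/-- The intermediate value property for polynomials over an ordered field (one of the
characterizations of real closed fields). -/
def PolyIVT (R : Type*) [Field R] [LinearOrder R] : Prop :=
  ∀ (f : Polynomial R) (a b : R), a < b → f.eval a * f.eval b < 0 →
    ∃ c, a < c ∧ c < b ∧ f.eval c = 0

lemma exists_irreducible_sign_change {K : Type*} [Field K] [LinearOrder K]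
    [IsStrictOrderedRing K] (a b : K) (h : Polynomial K) :
    h.eval a * h.eval b < 0 → ∃ q, Irreducible q ∧ q ∣ h ∧ q.eval a * q.eval b < 0 := by
  induction h using WfDvdMonoid.induction_on_irreducible with
  | zero => intro h; simp at h
  | unit u hu =>
    intro h
    obtain ⟨c, -, rfl⟩ := Polynomial.isUnit_iff.1 hu
    simp only [Polynomial.eval_C] at h
    exact absurd h (not_lt.2 (mul_self_nonneg c))
  | mul h i hh hi ih =>
    intro hlt
    by_cases hs : i.eval a * i.eval b < 0
    · exact ⟨i, hi, dvd_mul_right _ _, hs⟩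
    · have : h.eval a * h.eval b < 0 := by
        simp only [Polynomial.eval_mul] at hlt
        by_contra hcon
        have := mul_nonneg (not_lt.1 hs) (not_lt.1 hcon)
        nlinarith
      obtain ⟨q, hq, hqd, hq'⟩ := ih this
      exact ⟨q, hq, hqd.mul_left _, hq'⟩

/-- Modulo `f`, a weighted sum of squares of polynomials can be replaced by one of degree at most
`2 (deg f - 1)`. -/
lemma pushCone_reduce {K : Type*} [Field K] [LinearOrder K] [IsStrictOrderedRing K]
    (f : Polynomial K) (hf : f.natDegree ≠ 0) (s : Polynomial K)
    (hs : s ∈ pushCone (Polynomial.C : K →+* Polynomial K) (Subsemiring.nonneg K)) :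
    ∃ s' : Polynomial K, (∀ x, 0 ≤ s'.eval x) ∧
      s' ∈ pushCone (Polynomial.C : K →+* Polynomial K) (Subsemiring.nonneg K) ∧
      s'.natDegree ≤ 2 * (f.natDegree - 1) ∧ f ∣ s - s' := by
  refine AddSubmonoid.closure_induction (motive := fun s _ => ∃ s' : Polynomial K,
      (∀ x, 0 ≤ s'.eval x) ∧
      s' ∈ pushCone (Polynomial.C : K →+* Polynomial K) (Subsemiring.nonneg K) ∧
      s'.natDegree ≤ 2 * (f.natDegree - 1) ∧ f ∣ s - s') ?_ ?_ ?_ (mem_pushCone.1 hs)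
  · rintro _ ⟨c, hc, g, rfl⟩
    have hc' : 0 ≤ c := hc
    have hlt := Polynomial.natDegree_mod_lt g hf
    refine ⟨Polynomial.C c * ((g % f) * (g % f)), ?_, ?_, ?_, ?_⟩
    · intro x
      simp only [Polynomial.eval_mul, Polynomial.eval_C]
      exact mul_nonneg hc' (mul_self_nonneg _)
    · exact AddSubmonoid.subset_closure ⟨c, hc, _, rfl⟩
    · refine (Polynomial.natDegree_C_mul_le _ _).trans (Polynomial.natDegree_mul_le.trans ?_)
      omega
    · have h1 : f ∣ g - g % f := ⟨g / f, by
        linear_combination -(EuclideanDomain.div_add_mod g f)⟩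
      have h2 : Polynomial.C c * (g * g) - Polynomial.C c * ((g % f) * (g % f)) =
        (g - g % f) * (Polynomial.C c * (g + g % f)) := by ring
      rw [h2]; exact h1.mul_right _
  · exact ⟨0, by simp, zero_mem _, by simp, by simp⟩
  · rintro s t _ _ ⟨s', h1, h2, h3, h4⟩ ⟨t', k1, k2, k3, k4⟩
    refine ⟨s' + t', fun x => ?_, add_mem h2 k2, ?_, ?_⟩
    · rw [Polynomial.eval_add]; exact add_nonneg (h1 x) (k1 x)
    · exact (Polynomial.natDegree_add_le _ _).trans (max_le h3 k3)
    · have : s + t - (s' + t') = (s - s') + (t - t') := by ring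
      rw [this]; exact dvd_add h4 k4

/-- An irreducible polynomial `f` which changes sign generates a real ideal relative to the
ordering. Otherwise `1 + s = f h` with `deg h < deg f`, and `h` changes sign as well since `f h > 0`;
an irreducible factor of `h` then contradicts induction on the degree. -/
lemma not_dvd_one_add_of_sign_change {K : Type*} [Field K] [LinearOrder K]
    [IsStrictOrderedRing K] (a b : K) (N : ℕ) : ∀ f : Polynomial K, f.natDegree ≤ N →
    Irreducible f → f.eval a * f.eval b < 0 →
    ∀ s ∈ pushCone (Polynomial.C : K →+* Polynomial K) (Subsemiring.nonneg K), ¬ f ∣ 1 + s := by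
  induction N with
  | zero =>
    intro f hf hirr
    exact absurd (Nat.le_zero.1 hf) hirr.natDegree_pos.ne'
  | succ N ih =>
    intro f hf hirr hab s hs hdvd
    obtain ⟨s', h1, h2, h3, h4⟩ := pushCone_reduce f hirr.natDegree_pos.ne' s hs
    have hd : f ∣ 1 + s' := by
      have : 1 + s' = (1 + s) - (s - s') := by ring
      rw [this]; exact dvd_sub hdvd h4
    obtain ⟨h, hh⟩ := hd
    have hpos : ∀ x, 0 < f.eval x * h.eval x := by
      intro x
      rw [← Polynomial.eval_mul, ← hh, Polynomial.eval_add, Polynomial.eval_one]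
      linarith [h1 x]
    have hh0 : h ≠ 0 := by
      rintro rfl
      simpa using hpos a
    have hdeg : f.natDegree + h.natDegree = (1 + s').natDegree := by
      rw [hh, Polynomial.natDegree_mul hirr.ne_zero hh0]
    have hdeg2 : (1 + s').natDegree ≤ 2 * (f.natDegree - 1) :=
      (Polynomial.natDegree_add_le _ _).trans (max_le (by simp) h3)
    have hsign : h.eval a * h.eval b < 0 := by
      by_contra hcon
      have e1 := mul_pos (hpos a) (hpos b)
      have e2 := mul_nonneg (neg_nonneg.2 hab.le) (not_lt.1 hcon)
      nlinarith
    obtain ⟨q, hq, hqd, hq'⟩ := exists_irreducible_sign_change a b h hsign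
    refine ih q ?_ hq hq' s' h2 (hqd.trans ⟨f, by rw [hh, mul_comm]⟩)
    have := Polynomial.natDegree_le_of_dvd hqd hh0
    have := hirr.natDegree_pos
    omega

/-- If `q` is irreducible and changes sign over the ordered field `K`, the ordering extends to
`K[X]/(q)`. -/
lemma exists_order_adjoinRoot {K : Type*} [Field K] [LinearOrder K] [IsStrictOrderedRing K]
    (a b : K) (q : Polynomial K) [Fact (Irreducible q)] (hq : q.eval a * q.eval b < 0) :
    ∃ (_ : LinearOrder (AdjoinRoot q)) (_ : IsStrictOrderedRing (AdjoinRoot q)),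
      ∀ x : K, 0 ≤ x → 0 ≤ AdjoinRoot.of q x := by
  obtain ⟨o, ho, h⟩ := exists_order_of_pushCone (AdjoinRoot.of q) (Subsemiring.nonneg K) (by
    intro hneg
    have key : ∀ z ∈ pushCone (AdjoinRoot.of q) (Subsemiring.nonneg K),
        ∃ s ∈ pushCone (Polynomial.C : K →+* Polynomial K) (Subsemiring.nonneg K),
          AdjoinRoot.mk q s = z := by
      intro z hz
      refine AddSubmonoid.closure_induction (motive := fun z _ =>
        ∃ s ∈ pushCone (Polynomial.C : K →+* Polynomial K) (Subsemiring.nonneg K),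
          AdjoinRoot.mk q s = z) ?_ ?_ ?_ (mem_pushCone.1 hz)
      · rintro _ ⟨c, hc, y, rfl⟩
        obtain ⟨g, rfl⟩ := AdjoinRoot.mk_surjective y
        exact ⟨Polynomial.C c * (g * g), AddSubmonoid.subset_closure ⟨c, hc, g, rfl⟩, by
          simp⟩
      · exact ⟨0, zero_mem _, by simp⟩
      · rintro _ _ _ _ ⟨s, hs, rfl⟩ ⟨t, ht, rfl⟩
        exact ⟨s + t, add_mem hs ht, by simp⟩
    obtain ⟨s, hs, hs1⟩ := key _ hneg
    refine not_dvd_one_add_of_sign_change a b _ q le_rfl Fact.out hq s hs ?_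
    rw [← AdjoinRoot.mk_eq_zero, map_add, map_one, hs1]
    ring)
  exact ⟨o, ho, fun x hx => h x hx⟩

/-- The cones in a field `Ω` which are the nonnegative elements of an ordered subfield whose
ordering extends that of `F`. -/
structure FieldCone {F Ω : Type*} [Field F] [LinearOrder F] [Field Ω] (i : F →+* Ω)
    (C : Subsemiring Ω) : Prop where
  inv_mem : ∀ x ∈ C, x⁻¹ ∈ C
  eq_zero : ∀ x ∈ C, -x ∈ C → x = 0
  total : ∀ x ∈ C, ∀ y ∈ C, x - y ∈ C ∨ y - x ∈ C
  base : ∀ r : F, 0 ≤ r → i r ∈ C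

lemma fieldCone_map {F Ω L : Type*} [Field F] [LinearOrder F] [Field Ω] (i : F →+* Ω)
    [Field L] [LinearOrder L] [IsStrictOrderedRing L] (ψ : L →+* Ω)
    (hb : ∀ r : F, 0 ≤ r → ∃ x : L, 0 ≤ x ∧ ψ x = i r) :
    FieldCone i ((Subsemiring.nonneg L).map ψ) where
  inv_mem := by
    rintro _ ⟨x, hx, rfl⟩
    exact ⟨x⁻¹, inv_nonneg.2 (show 0 ≤ x from hx), map_inv₀ ψ x⟩
  eq_zero := by
    rintro _ ⟨x, hx, rfl⟩ ⟨y, hy, hxy⟩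
    have hx' : 0 ≤ x := hx
    have hy' : 0 ≤ y := hy
    have h0 : ψ (x + y) = 0 := by rw [map_add, hxy]; ring
    have : x + y = 0 := (map_eq_zero ψ).1 h0
    have : x = 0 := by linarith
    rw [this, map_zero]
  total := by
    rintro _ ⟨x, hx, rfl⟩ _ ⟨y, hy, rfl⟩
    rcases le_total x y with h | h
    · exact Or.inr ⟨y - x, sub_nonneg.2 h, map_sub _ _ _⟩
    · exact Or.inl ⟨x - y, sub_nonneg.2 h, map_sub _ _ _⟩
  base := by
    intro r hr
    obtain ⟨x, hx, h⟩ := hb r hr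
    exact ⟨x, hx, h⟩

/-- The subfield `C ∪ -C`. -/
def FieldCone.subfield {F Ω : Type*} [Field F] [LinearOrder F] [Field Ω] {i : F →+* Ω}
    {C : Subsemiring Ω} (h : FieldCone i C) : Subfield Ω where
  carrier := {x | x ∈ C ∨ -x ∈ C}
  zero_mem' := Or.inl C.zero_mem
  one_mem' := Or.inl C.one_mem
  neg_mem' := by
    rintro x (hx | hx)
    · exact Or.inr (by simpa using hx)
    · exact Or.inl hx
  add_mem' := by
    rintro x y (hx | hx) (hy | hy)
    · exact Or.inl (add_mem hx hy)
    · rcases h.total _ hx _ hy with h1 | h1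
      · exact Or.inl (by simpa using h1)
      · refine Or.inr (by convert h1 using 1; ring)
    · rcases h.total _ hx _ hy with h1 | h1
      · refine Or.inr (by convert h1 using 1; ring)
      · refine Or.inl (by convert h1 using 1; ring)
    · refine Or.inr (by rw [neg_add]; exact add_mem hx hy)
  mul_mem' := by
    rintro x y (hx | hx) (hy | hy)
    · exact Or.inl (mul_mem hx hy)
    · exact Or.inr (by simpa using mul_mem hx hy)
    · exact Or.inr (by simpa using mul_mem hx hy)
    · exact Or.inl (by simpa using mul_mem hx hy)
  inv_mem' := by
    rintro x (hx | hx)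
    · exact Or.inl (h.inv_mem _ hx)
    · exact Or.inr (by simpa using h.inv_mem _ hx)

/-- Every ordered field embeds into an ordered field with the intermediate value property: a
maximal ordered subfield of the algebraic closure has it, as a sign-changing irreducible polynomial
without a root would allow the ordering to be extended. -/
lemma exists_polyIVT_extension (F : Type) [Field F] [LinearOrder F] [IsStrictOrderedRing F] :
    ∃ (R : Type) (_ : Field R) (_ : LinearOrder R) (_ : IsStrictOrderedRing R) (ι : F →+* R),
      (∀ x, 0 ≤ x → 0 ≤ ι x) ∧ PolyIVT R := by
  let Ω := AlgebraicClosure F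
  let i : F →+* Ω := algebraMap F Ω
  obtain ⟨C, -, hC⟩ := zorn_le_nonempty₀ {C : Subsemiring Ω | FieldCone i C} (by
    intro c hc hchain y hy
    have hmem : ∀ x, x ∈ sSup c ↔ ∃ s ∈ c, x ∈ s := fun x =>
      Subsemiring.mem_sSup_of_directedOn ⟨y, hy⟩ hchain.directedOn
    have hmem2 : ∀ x ∈ sSup c, ∀ z ∈ sSup c, ∃ s ∈ c, x ∈ s ∧ z ∈ s := by
      intro x hx z hz
      obtain ⟨s, hs, hxs⟩ := (hmem x).1 hx
      obtain ⟨t, ht, hzt⟩ := (hmem z).1 hz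
      rcases hchain.total hs ht with h | h
      · exact ⟨t, ht, h hxs, hzt⟩
      · exact ⟨s, hs, hxs, h hzt⟩
    refine ⟨sSup c, ⟨?_, ?_, ?_, ?_⟩, fun z hz => le_sSup hz⟩
    · intro x hx
      obtain ⟨s, hs, hxs⟩ := (hmem x).1 hx
      exact (hmem _).2 ⟨s, hs, (hc hs).inv_mem _ hxs⟩
    · intro x hx hx'
      obtain ⟨s, hs, h1, h2⟩ := hmem2 _ hx _ hx'
      exact (hc hs).eq_zero _ h1 h2
    · intro x hx z hz
      obtain ⟨s, hs, h1, h2⟩ := hmem2 _ hx _ hz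
      exact ((hc hs).total _ h1 _ h2).imp (fun h => (hmem _).2 ⟨s, hs, h⟩)
        (fun h => (hmem _).2 ⟨s, hs, h⟩)
    · intro r hr
      exact (hmem _).2 ⟨y, hy, (hc hy).base r hr⟩)
    ((Subsemiring.nonneg F).map i) (fieldCone_map i i fun r hr => ⟨r, hr, rfl⟩)
  have hCc : FieldCone i C := hC.prop
  let K : Subfield Ω := hCc.subfield
  obtain ⟨o, ho, hpos⟩ := exists_order_of_cone (C.comap K.subtype)
    (fun x hx hx' => Subtype.ext (hCc.eq_zero _ hx hx')) (fun x => x.2)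
  have hιK : ∀ x : F, i x ∈ K := by
    intro x
    rcases le_total 0 x with h | h
    · exact Or.inl (hCc.base x h)
    · exact Or.inr (by rw [← map_neg]; exact hCc.base (-x) (neg_nonneg.2 h))
  refine ⟨K, inferInstance, o, ho, i.codRestrict K hιK,
    fun x hx => (hpos _).2 (hCc.base x hx), ?_⟩
  intro f a b hab hf
  obtain ⟨q, hq, hqf, hqs⟩ := exists_irreducible_sign_change a b f hf
  have : Fact (Irreducible q) := ⟨hq⟩
  obtain ⟨oL, hoL, hL⟩ := exists_order_adjoinRoot a b q hqs
  obtain ⟨θ, hθ⟩ := IsAlgClosed.exists_eval₂_eq_zero K.subtype q hq.degree_pos.ne'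
  let ψ : AdjoinRoot q →+* Ω := AdjoinRoot.lift K.subtype θ hθ
  have hCC : C ≤ (Subsemiring.nonneg (AdjoinRoot q)).map ψ := by
    intro x hx
    let x' : K := ⟨x, Or.inl hx⟩
    exact ⟨AdjoinRoot.of q x', hL x' ((hpos x').2 hx), AdjoinRoot.lift_of hθ⟩
  have hle := hC.le_of_ge (y := (Subsemiring.nonneg (AdjoinRoot q)).map ψ)
    (fieldCone_map i ψ fun r hr => by
      obtain ⟨x, hx, h⟩ := hCC (hCc.base r hr)
      exact ⟨x, hx, h⟩) hCC
  have hθK : θ ∈ K := by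
    have hroot : ψ (AdjoinRoot.root q) = θ := AdjoinRoot.lift_root hθ
    rcases le_total 0 (AdjoinRoot.root q) with h | h
    · exact Or.inl (hle ⟨_, h, hroot⟩)
    · exact Or.inr (hle ⟨-AdjoinRoot.root q, neg_nonneg.2 h, by rw [map_neg, hroot]⟩)
  let t : K := ⟨θ, hθK⟩
  have ht : q.IsRoot t := by
    have : K.subtype (q.eval t) = 0 := by
      rw [← hθ, ← Polynomial.eval₂_at_apply]; rfl
    exact (map_eq_zero K.subtype).1 this
  -- `q` is linear with root `t`, so a sign change between `a` and `b` puts `t` between them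
  have hdeg := Polynomial.degree_eq_one_of_irreducible_of_root hq ht
  have heval : ∀ x, q.eval x = q.coeff 1 * (x - t) := by
    intro x
    have h1 := Polynomial.eq_X_add_C_of_degree_le_one hdeg.le
    have h2 : q.eval x = q.coeff 1 * x + q.coeff 0 := by
      conv_lhs => rw [h1]
      simp
    have h3 : q.coeff 1 * t + q.coeff 0 = 0 := by
      have h4 : q.eval t = q.coeff 1 * t + q.coeff 0 := by
        conv_lhs => rw [h1]
        simp
      rw [← h4]; exact ht
    rw [h2]; linear_combination h3
  rw [heval, heval] at hqs
  have hsgn : (a - t) * (b - t) < 0 := by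
    by_contra hcon
    have := mul_nonneg (mul_self_nonneg (q.coeff 1)) (not_lt.1 hcon)
    nlinarith
  have hroot : f.eval t = 0 := Polynomial.eval_eq_zero_of_dvd_of_eval_eq_zero hqf ht
  refine ⟨t, ?_, ?_, hroot⟩
  · by_contra h
    have := mul_nonneg (sub_nonneg.2 (not_lt.1 h)) (sub_nonneg.2 ((not_lt.1 h).trans hab.le))
    linarith
  · by_contra h
    have := mul_nonneg_of_nonpos_of_nonpos (sub_nonpos.2 (hab.le.trans (not_lt.1 h)))
      (sub_nonpos.2 (not_lt.1 h))
    linarith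

/-! ### Roots and cuts in two ordered extensions -/

set_option linter.unusedSectionVars false

section RealClosed
variable {R : Type*} [Field R] [LinearOrder R] [IsStrictOrderedRing R]

lemma PolyIVT.same_sign (hR : PolyIVT R) (f : Polynomial R) {x y : R} (hxy : x ≤ y)
    (h : ∀ z, x ≤ z → z ≤ y → f.eval z ≠ 0) : 0 < f.eval x * f.eval y := by
  have hx := h x le_rfl hxy
  have hy := h y hxy le_rfl
  rcases lt_or_gt_of_ne (mul_ne_zero hx hy) with h1 | h1
  · rcases hxy.lt_or_eq with h2 | h2
    · obtain ⟨c, hc1, hc2, hc⟩ := hR f x y h2 h1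
      exact absurd hc (h c hc1.le hc2.le)
    · subst h2
      exact absurd h1 (not_lt.2 (mul_self_nonneg _))
  · exact h1

/-- Rolle's theorem between consecutive roots. -/
lemma PolyIVT.rolle_aux (hR : PolyIVT R) (f : Polynomial R) (hf : f ≠ 0) {a b : R} (hab : a < b)
    (ha : f.eval a = 0) (hb : f.eval b = 0) (hno : ∀ z, a < z → z < b → f.eval z ≠ 0) :
    ∃ c, a < c ∧ c < b ∧ f.derivative.eval c = 0 := by
  have hm := (Polynomial.rootMultiplicity_pos hf).2 ha
  obtain ⟨f1, h1, hnd1⟩ := Polynomial.exists_eq_pow_rootMultiplicity_mul_and_not_dvd f hf a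
  generalize f.rootMultiplicity a = m at h1 hm
  obtain ⟨m, rfl⟩ := Nat.exists_eq_succ_of_ne_zero hm.ne'
  have hf1 : f1 ≠ 0 := by rintro rfl; simp at hnd1
  have hf1b : f1.eval b = 0 := by
    rw [h1] at hb
    simp only [Polynomial.eval_mul, Polynomial.eval_pow, Polynomial.eval_sub, Polynomial.eval_X,
      Polynomial.eval_C, mul_eq_zero] at hb
    exact hb.resolve_left (pow_ne_zero _ (sub_ne_zero.2 hab.ne'))
  have hk := (Polynomial.rootMultiplicity_pos hf1).2 hf1b
  obtain ⟨u, h2, hnd2⟩ := Polynomial.exists_eq_pow_rootMultiplicity_mul_and_not_dvd f1 hf1 b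
  generalize f1.rootMultiplicity b = k at h2 hk
  obtain ⟨k, rfl⟩ := Nat.exists_eq_succ_of_ne_zero hk.ne'
  have hub : u.eval b ≠ 0 := fun h => hnd2 (Polynomial.dvd_iff_isRoot.2 h)
  have hua : u.eval a ≠ 0 := by
    intro h
    apply hnd1
    rw [h2]
    exact (Polynomial.dvd_iff_isRoot.2 h).mul_left _
  have hu : ∀ z, a ≤ z → z ≤ b → u.eval z ≠ 0 := by
    intro z hz1 hz2
    rcases hz1.lt_or_eq with hz1 | rfl
    · rcases hz2.lt_or_eq with hz2 | rfl
      · intro h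
        apply hno z hz1 hz2
        rw [h1, h2]; simp [h]
      · exact hub
    · exact hua
  have hpos := hR.same_sign u hab.le hu
  let h : Polynomial R := Polynomial.C ((m + 1 : ℕ) : R) * (Polynomial.X - Polynomial.C b) * u
    + Polynomial.C ((k + 1 : ℕ) : R) * (Polynomial.X - Polynomial.C a) * u
    + (Polynomial.X - Polynomial.C a) * (Polynomial.X - Polynomial.C b) * u.derivative
  have hder : f.derivative = (Polynomial.X - Polynomial.C a) ^ m *
      (Polynomial.X - Polynomial.C b) ^ k * h := by
    rw [h1, h2]
    simp only [h, Polynomial.derivative_mul, Polynomial.derivative_X_sub_C_pow, Nat.succ_eq_add_one,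
      Nat.add_sub_cancel]
    ring
  have hma : h.eval a = ((m + 1 : ℕ) : R) * (a - b) * u.eval a := by simp [h]
  have hmb : h.eval b = ((k + 1 : ℕ) : R) * (b - a) * u.eval b := by simp [h]
  obtain ⟨c, hc1, hc2, hc⟩ := hR h a b hab (by
    rw [hma, hmb]
    have e1 : (0 : R) < ((m + 1 : ℕ) : R) := by positivity
    have e2 : (0 : R) < ((k + 1 : ℕ) : R) := by positivity
    have e3 : 0 < b - a := sub_pos.2 hab
    have e4 : 0 < ((m + 1 : ℕ) : R) * ((k + 1 : ℕ) : R) * ((b - a) * (b - a)) *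
      (u.eval a * u.eval b) := by positivity
    linarith [e4, show ((m + 1 : ℕ) : R) * (a - b) * u.eval a * (((k + 1 : ℕ) : R) * (b - a) *
      u.eval b) = -(((m + 1 : ℕ) : R) * ((k + 1 : ℕ) : R) * ((b - a) * (b - a)) *
      (u.eval a * u.eval b)) by ring])
  exact ⟨c, hc1, hc2, by rw [hder, Polynomial.eval_mul, hc, mul_zero]⟩

lemma PolyIVT.rolle (hR : PolyIVT R) (f : Polynomial R) (hf : f ≠ 0) {a b : R} (hab : a < b)
    (ha : f.eval a = 0) (hb : f.eval b = 0) :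
    ∃ c, a < c ∧ c < b ∧ f.derivative.eval c = 0 := by
  classical
  let s := f.roots.toFinset.filter fun z => a < z
  have hmem : ∀ z, z ∈ s ↔ f.eval z = 0 ∧ a < z := by
    intro z; simp [s, hf]
  have hs : s.Nonempty := ⟨b, (hmem b).2 ⟨hb, hab⟩⟩
  have hmin := (hmem _).1 (s.min'_mem hs)
  obtain ⟨c, hc1, hc2, hc⟩ := hR.rolle_aux f hf hmin.2 ha hmin.1 (fun z h1 h2 h3 =>
    absurd (s.min'_le z ((hmem z).2 ⟨h3, h1⟩)) (not_le.2 h2))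
  exact ⟨c, hc1, hc2.trans_le (s.min'_le b ((hmem b).2 ⟨hb, hab⟩)), hc⟩

/-- On an interval without critical points, the sign of `f` tells on which side of the root `β`
a point lies. -/
lemma PolyIVT.side_of_root (hR : PolyIVT R) (f : Polynomial R) {a b β : R} (haβ : a < β)
    (hβb : β < b) (hβ : f.eval β = 0) (hd : ∀ z, a < z → z < b → f.derivative.eval z ≠ 0)
    (c : R) (hac : a ≤ c) (hcb : c ≤ b) (hc : c ≠ β) : f.eval a * f.eval c * (c - β) < 0 := by
  have hf : f ≠ 0 := by
    rintro rfl
    exact hd β haβ hβb (by simp)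
  obtain ⟨u, hu⟩ := Polynomial.dvd_iff_isRoot.2 hβ
  have heval : ∀ z, f.eval z = (z - β) * u.eval z := fun z => by
    rw [hu]; simp
  have hder : f.derivative.eval β = u.eval β := by rw [hu]; simp
  have hno : ∀ z, a ≤ z → z ≤ b → u.eval z ≠ 0 := by
    intro z hz1 hz2 h0
    rcases lt_trichotomy z β with h | h | h
    · obtain ⟨w, hw1, hw2, hw⟩ := hR.rolle f hf h (by rw [heval, h0, mul_zero]) hβ
      exact hd w (hz1.trans_lt hw1) (hw2.trans hβb) hw
    · subst h
      exact hd z haβ hβb (hder.trans h0)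
    · obtain ⟨w, hw1, hw2, hw⟩ := hR.rolle f hf h hβ (by rw [heval, h0, mul_zero])
      exact hd w (haβ.trans hw1) (hw2.trans_le hz2) hw
  have h1 : 0 < u.eval a * u.eval c := hR.same_sign u hac fun z h1 h2 => hno z h1 (h2.trans hcb)
  rw [heval, heval]
  have h2 : 0 < (c - β) * (c - β) := mul_self_pos.2 (sub_ne_zero.2 hc)
  have h3 := mul_pos (mul_pos (sub_pos.2 haβ) h2) h1
  linarith [show (a - β) * u.eval a * ((c - β) * u.eval c) * (c - β) =
    -((β - a) * ((c - β) * (c - β)) * (u.eval a * u.eval c)) by ring]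
end RealClosed

section TwoFields
variable {K R₁ R₂ : Type*} [Field K] [LinearOrder K] [IsStrictOrderedRing K]
  [Field R₁] [LinearOrder R₁] [IsStrictOrderedRing R₁]
  [Field R₂] [LinearOrder R₂] [IsStrictOrderedRing R₂]

/-- The elements `α` and `β` of two ordered extensions of `K` realize the same cut of `K`. -/
def CutMatch (i : K →+* R₁) (j : K →+* R₂) (α : R₁) (β : R₂) : Prop :=
  ∀ c, (i c < α ↔ j c < β) ∧ (α < i c ↔ β < j c)

lemma CutMatch.eq_iff {i : K →+* R₁} {j : K →+* R₂} {α : R₁} {β : R₂} (h : CutMatch i j α β)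
    (c : K) : α = i c ↔ β = j c := by
  have h1 := (h c).1
  have h2 := (h c).2
  constructor
  · rintro rfl
    simp only [lt_irrefl, false_iff, not_lt] at h1 h2
    exact le_antisymm h1 h2
  · rintro rfl
    simp only [lt_irrefl, iff_false, not_lt] at h1 h2
    exact le_antisymm h1 h2

/-- All roots of `q` in the extension lie in the base field. -/
def RootsIn (i : K →+* R₁) (q : Polynomial K) : Prop :=
  ∀ γ : R₁, q.eval₂ i γ = 0 → ∃ c, i c = γ

lemma exists_root_bound (j : K →+* R₂) (hj : StrictMono j) (q : Polynomial K) (hq : q ≠ 0) :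
    ∃ M : K, ∀ γ : R₂, q.eval₂ j γ = 0 → j (-M) < γ ∧ γ < j M := by
  -- `|γ| ≥ M` would make the leading term dominate the others
  let lc := q.leadingCoeff
  have hlc : lc ≠ 0 := Polynomial.leadingCoeff_ne_zero.2 hq
  let N := q.natDegree
  let M : K := 1 + ∑ k ∈ Finset.range N, |q.coeff k / lc|
  have hM1 : 1 ≤ M := le_add_of_nonneg_right (Finset.sum_nonneg fun _ _ => abs_nonneg _)
  have habs : ∀ x, |j x| = j |x| := by
    intro x
    rcases le_total 0 x with h | h
    · rw [abs_of_nonneg h, abs_of_nonneg (by simpa using hj.monotone h)]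
    · rw [abs_of_nonpos h, abs_of_nonpos (by simpa using hj.monotone h), map_neg]
  refine ⟨M, fun γ hγ => ?_⟩
  by_contra hcon
  have hγM : j M ≤ |γ| := by
    by_contra h
    rw [not_le, abs_lt, ← map_neg] at h
    exact hcon h
  have hγ1 : 1 ≤ |γ| := le_trans (by simpa using hj.monotone hM1) hγM
  have hjlc : j lc ≠ 0 := (map_ne_zero j).2 hlc
  rw [Polynomial.eval₂_eq_sum_range, Finset.sum_range_succ] at hγ
  change ∑ k ∈ Finset.range N, j (q.coeff k) * γ ^ k + j lc * γ ^ N = 0 at hγ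
  have h1 : γ ^ N = -∑ k ∈ Finset.range N, j (q.coeff k / lc) * γ ^ k := by
    have : j lc * γ ^ N = -∑ k ∈ Finset.range N, j (q.coeff k) * γ ^ k := by
      linear_combination hγ
    have h2 : ∑ k ∈ Finset.range N, j (q.coeff k / lc) * γ ^ k
        = (j lc)⁻¹ * ∑ k ∈ Finset.range N, j (q.coeff k) * γ ^ k := by
      rw [Finset.mul_sum]
      refine Finset.sum_congr rfl fun k _ => ?_
      rw [map_div₀]; field_simp
    rw [h2, ← mul_neg, ← this]; field_simp
  have hγpos : 0 < |γ| := by linarith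
  rcases Nat.eq_zero_or_pos N with hN | hN
  · rw [hN] at h1; simp at h1
  obtain ⟨N', hN'⟩ := Nat.exists_eq_succ_of_ne_zero hN.ne'
  have h2 : |γ| ^ N ≤ (j M - 1) * |γ| ^ N' := by
    rw [← abs_pow, h1, abs_neg]
    refine (Finset.abs_sum_le_sum_abs _ _).trans ?_
    have : j M - 1 = ∑ k ∈ Finset.range N, j |q.coeff k / lc| := by
      simp only [M, map_add, map_one, map_sum]; ring
    rw [this, Finset.sum_mul]
    refine Finset.sum_le_sum fun k hk => ?_
    rw [abs_mul, habs, abs_pow]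
    refine mul_le_mul_of_nonneg_left (pow_le_pow_right₀ hγ1 ?_) ?_
    · have := Finset.mem_range.1 hk; omega
    · rw [← habs]; exact abs_nonneg _
  rw [hN', pow_succ] at h2
  have h3 : 0 < |γ| ^ N' := pow_pos hγpos _
  nlinarith

lemma sign_map (i : K →+* R₁) (hi : StrictMono i) (x : K) : 0 < i x ↔ 0 < x := by
  rw [← hi.lt_iff_lt, map_zero]

/-- If the critical points of `q` are rational over `K` in both fields, each root of `q` in `R₂`
has a partner in `R₁` realizing the same cut. -/
lemma exists_partner_root (hR₁ : PolyIVT R₁) (hR₂ : PolyIVT R₂) (i : K →+* R₁) (j : K →+* R₂)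
    (hi : StrictMono i) (hj : StrictMono j) (q : Polynomial K) (hq : q ≠ 0)
    (h1 : RootsIn i q.derivative) (h2 : RootsIn j q.derivative) (hq' : q.derivative ≠ 0)
    (β : R₂) (hβ : q.eval₂ j β = 0) : ∃ α : R₁, q.eval₂ i α = 0 ∧ CutMatch i j α β := by
  classical
  by_cases hβK : ∃ c, j c = β
  · obtain ⟨c, rfl⟩ := hβK
    refine ⟨i c, ?_, fun d => ⟨?_, ?_⟩⟩
    · rw [Polynomial.eval₂_at_apply] at hβ ⊢
      rw [(map_eq_zero j).1 hβ, map_zero]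
    · rw [hi.lt_iff_lt, hj.lt_iff_lt]
    · rw [hi.lt_iff_lt, hj.lt_iff_lt]
  push Not at hβK
  obtain ⟨M, hM⟩ := exists_root_bound j hj q hq
  -- below, `a < b` will be the critical points (or root bounds) of `q` in `K` adjacent to `β`
  let Z := q.derivative.roots.toFinset
  have hZ : ∀ z, z ∈ Z ↔ q.derivative.eval z = 0 := by intro z; simp [Z, hq']
  let A := insert (-M) (Z.filter fun z => j z < β)
  let B := insert M (Z.filter fun z => β < j z)
  have hA : A.Nonempty := ⟨-M, Finset.mem_insert_self _ _⟩
  have hB : B.Nonempty := ⟨M, Finset.mem_insert_self _ _⟩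
  have hAlt : ∀ z ∈ A, j z < β := by
    intro z hz
    rcases Finset.mem_insert.1 hz with rfl | hz
    · exact (hM β hβ).1
    · exact (Finset.mem_filter.1 hz).2
  have hBlt : ∀ z ∈ B, β < j z := by
    intro z hz
    rcases Finset.mem_insert.1 hz with rfl | hz
    · exact (hM β hβ).2
    · exact (Finset.mem_filter.1 hz).2
  let a := A.max' hA
  let b := B.min' hB
  have haβ : j a < β := hAlt _ (A.max'_mem hA)
  have hβb : β < j b := hBlt _ (B.min'_mem hB)
  have hab : a < b := hj.lt_iff_lt.1 (haβ.trans hβb)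
  have hnoK : ∀ z, a < z → z < b → q.derivative.eval z ≠ 0 := by
    intro z hz1 hz2 h0
    rcases lt_or_gt_of_ne (hβK z) with h | h
    · exact absurd (A.le_max' z (Finset.mem_insert_of_mem
        (Finset.mem_filter.2 ⟨(hZ z).2 h0, h⟩))) (not_le.2 hz1)
    · exact absurd (B.min'_le z (Finset.mem_insert_of_mem
        (Finset.mem_filter.2 ⟨(hZ z).2 h0, h⟩))) (not_le.2 hz2)
  have hno1 : ∀ z, i a < z → z < i b → (q.map i).derivative.eval z ≠ 0 := by
    intro z hz1 hz2 h0
    rw [Polynomial.derivative_map, Polynomial.eval_map] at h0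
    obtain ⟨c, rfl⟩ := h1 z h0
    rw [Polynomial.eval₂_at_apply] at h0
    exact hnoK c (hi.lt_iff_lt.1 hz1) (hi.lt_iff_lt.1 hz2) ((map_eq_zero i).1 h0)
  have hno2 : ∀ z, j a < z → z < j b → (q.map j).derivative.eval z ≠ 0 := by
    intro z hz1 hz2 h0
    rw [Polynomial.derivative_map, Polynomial.eval_map] at h0
    obtain ⟨c, rfl⟩ := h2 z h0
    rw [Polynomial.eval₂_at_apply] at h0
    exact hnoK c (hj.lt_iff_lt.1 hz1) (hj.lt_iff_lt.1 hz2) ((map_eq_zero j).1 h0)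
  have hside2 : ∀ c, a ≤ c → c ≤ b → j (q.eval a * q.eval c) * (j c - β) < 0 := by
    intro c hc1 hc2
    have := hR₂.side_of_root (q.map j) haβ hβb (by rwa [Polynomial.eval_map]) hno2 (j c)
      (hj.monotone hc1) (hj.monotone hc2) (hβK c)
    rwa [Polynomial.eval_map_apply, Polynomial.eval_map_apply, ← map_mul] at this
  have hneg : q.eval a * q.eval b < 0 := by
    by_contra h
    have := mul_nonneg (show 0 ≤ j (q.eval a * q.eval b) by
      simpa using hj.monotone (not_lt.1 h)) (sub_nonneg.2 hβb.le)
    exact absurd (hside2 b hab.le le_rfl) (not_lt.2 this)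
  obtain ⟨α, haα, hαb, hα⟩ := hR₁ (q.map i) (i a) (i b) (hi hab) (by
    rw [Polynomial.eval_map_apply, Polynomial.eval_map_apply, ← map_mul]
    simpa using hi hneg)
  have hside1 : ∀ c, a ≤ c → c ≤ b → i c ≠ α → i (q.eval a * q.eval c) * (i c - α) < 0 := by
    intro c hc1 hc2 hne
    have := hR₁.side_of_root (q.map i) haα hαb hα hno1 (i c)
      (hi.monotone hc1) (hi.monotone hc2) hne
    rwa [Polynomial.eval_map_apply, Polynomial.eval_map_apply, ← map_mul] at this
  have hα' : q.eval₂ i α = 0 := by rwa [Polynomial.eval_map] at hα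
  refine ⟨α, hα', ?_⟩
  have hαK : ∀ c, i c ≠ α → (i c < α ↔ j c < β) := by
    intro c hne
    rcases lt_or_ge c a with hca | hca
    · exact iff_of_true ((hi hca).trans haα) ((hj hca).trans haβ)
    rcases lt_or_ge b c with hcb | hcb
    · exact iff_of_false (not_lt.2 (hαb.trans (hi hcb)).le) (not_lt.2 (hβb.trans (hj hcb)).le)
    have e1 := hside1 c hca hcb hne
    have e2 := hside2 c hca hcb
    rcases lt_or_ge 0 (q.eval a * q.eval c) with h | h
    · have h1 : 0 < i (q.eval a * q.eval c) := (sign_map i hi _).2 h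
      have h2 : 0 < j (q.eval a * q.eval c) := (sign_map j hj _).2 h
      exact iff_of_true (sub_neg.1 (by nlinarith)) (sub_neg.1 (by nlinarith))
    · have h1 : i (q.eval a * q.eval c) ≤ 0 := by simpa using hi.monotone h
      have h2 : j (q.eval a * q.eval c) ≤ 0 := by simpa using hj.monotone h
      refine iff_of_false (fun h3 => ?_) (fun h3 => ?_)
      · have := mul_nonneg_of_nonpos_of_nonpos h1 (sub_neg.2 h3).le
        linarith
      · have := mul_nonneg_of_nonpos_of_nonpos h2 (sub_neg.2 h3).le
        linarith
  have hαne : ∀ c, i c ≠ α := by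
    rintro c rfl
    have hca := hi.lt_iff_lt.1 haα
    have hcb := hi.lt_iff_lt.1 hαb
    have e2 := hside2 c hca.le hcb.le
    rw [Polynomial.eval₂_at_apply] at hα'
    rw [(map_eq_zero i).1 hα'] at e2
    simp at e2
  intro c
  refine ⟨hαK c (hαne c), ?_⟩
  rw [← not_le, ← not_le, not_iff_not, le_iff_lt_or_eq, le_iff_lt_or_eq]
  simp only [hαne c, hβK c, or_false]
  exact hαK c (hαne c)

/-- If all roots in `R₁` of polynomials of degree `< d` are rational over `K`, the same holds
in `R₂`. -/
lemma rootsIn_transfer (hR₁ : PolyIVT R₁) (hR₂ : PolyIVT R₂) (i : K →+* R₁) (j : K →+* R₂)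
    (hi : StrictMono i) (hj : StrictMono j) (d : ℕ)
    (h1 : ∀ q : Polynomial K, q ≠ 0 → q.natDegree < d → RootsIn i q) (e : ℕ) :
    ∀ q : Polynomial K, q ≠ 0 → q.natDegree < d → q.natDegree ≤ e → RootsIn j q := by
  induction e with
  | zero =>
    intro q hq _ he β hβ
    rw [Polynomial.eq_C_of_natDegree_le_zero he] at hβ hq
    simp only [Polynomial.eval₂_C] at hβ
    rw [(map_eq_zero j).1 hβ] at hq
    simp at hq
  | succ e ih =>
    intro q hq hd he β hβ
    by_cases h0 : q.natDegree = 0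
    · exact ih q hq hd (by omega) β hβ
    have hdlt := Polynomial.natDegree_derivative_lt h0
    have hq' : q.derivative ≠ 0 := fun h => h0 (Polynomial.derivative_eq_zero.1 h)
    obtain ⟨α, hα, hm⟩ := exists_partner_root hR₁ hR₂ i j hi hj q hq
      (h1 _ hq' (hdlt.trans hd)) (ih _ hq' (hdlt.trans hd) (by omega)) hq' β hβ
    obtain ⟨c, rfl⟩ := h1 q hq hd α hα
    exact ⟨c, ((hm.eq_iff c).1 rfl).symm⟩

/-- A polynomial whose roots are rational over `K` on both sides has equal signs at points
realizing the same cut. -/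
lemma sign_of_cutMatch (hR₁ : PolyIVT R₁) (hR₂ : PolyIVT R₂) (i : K →+* R₁) (j : K →+* R₂)
    (hi : StrictMono i) (hj : StrictMono j) (q : Polynomial K)
    (h1 : RootsIn i q) (h2 : RootsIn j q) (α : R₁) (β : R₂) (hm : CutMatch i j α β) :
    0 < q.eval₂ i α ↔ 0 < q.eval₂ j β := by
  classical
  by_cases hq : q = 0
  · simp [hq]
  let Z := q.roots.toFinset
  have hZ : ∀ z, z ∈ Z ↔ q.eval z = 0 := by intro z; simp [Z, hq]
  by_cases hex : ∃ z ∈ Z, α = i z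
  · obtain ⟨z, hz, hα⟩ := hex
    have hβ := (hm.eq_iff z).1 hα
    rw [hα, hβ, Polynomial.eval₂_at_apply, Polynomial.eval₂_at_apply, (hZ z).1 hz]
    simp
  push Not at hex
  obtain ⟨c, hc1, hc2⟩ := Order.exists_between_finsets (Z.filter fun z => i z < α)
    (Z.filter fun z => α < i z) (by
      intro x hx y hy
      exact hi.lt_iff_lt.1 ((Finset.mem_filter.1 hx).2.trans (Finset.mem_filter.1 hy).2))
  have key1 : 0 < (q.map i).eval α * (q.map i).eval (i c) := by
    have hno : ∀ z, (α ≤ z ∧ z ≤ i c ∨ i c ≤ z ∧ z ≤ α) → (q.map i).eval z ≠ 0 := by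
      intro z hz h0
      rw [Polynomial.eval_map] at h0
      obtain ⟨w, rfl⟩ := h1 z h0
      rw [Polynomial.eval₂_at_apply, map_eq_zero, ← hZ] at h0
      have hne := hex w h0
      rcases hz with ⟨ha, hb⟩ | ⟨ha, hb⟩
      · exact absurd (hi.le_iff_le.1 hb)
          (not_le.2 (hc2 w (Finset.mem_filter.2 ⟨h0, ha.lt_of_ne hne⟩)))
      · exact absurd (hi.le_iff_le.1 ha)
          (not_le.2 (hc1 w (Finset.mem_filter.2 ⟨h0, hb.lt_of_ne hne.symm⟩)))
    rcases le_total α (i c) with h | h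
    · exact hR₁.same_sign _ h fun z h1 h2 => hno z (Or.inl ⟨h1, h2⟩)
    · rw [mul_comm]
      exact hR₁.same_sign _ h fun z h1 h2 => hno z (Or.inr ⟨h1, h2⟩)
  have key2 : 0 < (q.map j).eval β * (q.map j).eval (j c) := by
    have hno : ∀ z, (β ≤ z ∧ z ≤ j c ∨ j c ≤ z ∧ z ≤ β) → (q.map j).eval z ≠ 0 := by
      intro z hz h0
      rw [Polynomial.eval_map] at h0
      obtain ⟨w, rfl⟩ := h2 z h0
      rw [Polynomial.eval₂_at_apply, map_eq_zero, ← hZ] at h0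
      have hne : β ≠ j w := fun h => hex w h0 ((hm.eq_iff w).2 h)
      rcases hz with ⟨ha, hb⟩ | ⟨ha, hb⟩
      · exact absurd (hj.le_iff_le.1 hb)
          (not_le.2 (hc2 w (Finset.mem_filter.2 ⟨h0, (hm w).2.2 (ha.lt_of_ne hne)⟩)))
      · exact absurd (hj.le_iff_le.1 ha)
          (not_le.2 (hc1 w (Finset.mem_filter.2 ⟨h0, (hm w).1.2 (hb.lt_of_ne hne.symm)⟩)))
    rcases le_total β (j c) with h | h
    · exact hR₂.same_sign _ h fun z h1 h2 => hno z (Or.inl ⟨h1, h2⟩)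
    · rw [mul_comm]
      exact hR₂.same_sign _ h fun z h1 h2 => hno z (Or.inr ⟨h1, h2⟩)
  rw [Polynomial.eval_map_apply, Polynomial.eval_map] at key1 key2
  rw [pos_iff_pos_of_mul_pos key1, pos_iff_pos_of_mul_pos key2, sign_map i hi, sign_map j hj]

end TwoFields

/-! ### Transfer through ultrapowers and the Positivstellensatz -/

section SignCompat
variable {R₁ R₂ : Type*} [Field R₁] [LinearOrder R₁] [IsStrictOrderedRing R₁]
  [Field R₂] [LinearOrder R₂] [IsStrictOrderedRing R₂]

/-- A subring of `R₁ × R₂` that is the graph of a sign-preserving partial isomorphism. -/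
def SignCompat (G : Subring (R₁ × R₂)) : Prop := ∀ z ∈ G, 0 < z.1 ↔ 0 < z.2

lemma SignCompat.zero_iff {G : Subring (R₁ × R₂)} (h : SignCompat G) {z : R₁ × R₂} (hz : z ∈ G) :
    z.1 = 0 ↔ z.2 = 0 := by
  have h1 := h z hz
  have h2 := h (-z) (neg_mem hz)
  simp only [Prod.fst_neg, Prod.snd_neg, Left.neg_pos_iff] at h2
  constructor <;> intro h0
  · simp only [h0, lt_irrefl, false_iff, not_lt] at h1 h2
    exact le_antisymm h1 h2
  · simp only [h0, lt_irrefl, iff_false, not_lt] at h1 h2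
    exact le_antisymm h1 h2

lemma SignCompat.inj {G : Subring (R₁ × R₂)} (h : SignCompat G) {x : R₁} {y y' : R₂}
    (hz : (x, y) ∈ G) (hz' : (x, y') ∈ G) : y = y' := by
  have := (h.zero_iff (sub_mem hz hz')).1 (by simp)
  simpa [sub_eq_zero] using this

lemma exists_maximal_signCompat (G₀ : Subring (R₁ × R₂)) (h₀ : SignCompat G₀) :
    ∃ G, G₀ ≤ G ∧ SignCompat G ∧ ∀ H, SignCompat H → G ≤ H → H ≤ G := by
  obtain ⟨G, hle, hG⟩ := zorn_le_nonempty₀ {G : Subring (R₁ × R₂) | SignCompat G} (by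
    intro c hc hchain y hy
    refine ⟨sSup c, fun z hz => ?_, fun z hz => le_sSup hz⟩
    rw [Subring.mem_sSup_of_directedOn ⟨y, hy⟩ hchain.directedOn] at hz
    obtain ⟨s, hs, h⟩ := hz
    exact hc hs z h) G₀ h₀
  exact ⟨G, hle, hG.prop, fun H hH hGH => hG.le_of_ge hH hGH⟩

/-- The fractions of a sign-compatible subring. -/
def SignCompat.fractions {G : Subring (R₁ × R₂)} (_hG : SignCompat G) : Subring (R₁ × R₂) where
  carrier := {z | ∃ x ∈ G, ∃ y ∈ G, y.1 ≠ 0 ∧ z * y = x}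
  zero_mem' := ⟨0, zero_mem _, 1, one_mem _, by simp, by simp⟩
  one_mem' := ⟨1, one_mem _, 1, one_mem _, by simp, by simp⟩
  neg_mem' := by
    rintro z ⟨x, hx, y, hy, h0, h⟩
    exact ⟨-x, neg_mem hx, y, hy, h0, by rw [← h]; ring⟩
  add_mem' := by
    rintro z z' ⟨x, hx, y, hy, h0, h⟩ ⟨x', hx', y', hy', h0', h'⟩
    exact ⟨x * y' + x' * y, add_mem (mul_mem hx hy') (mul_mem hx' hy), y * y', mul_mem hy hy',
      mul_ne_zero h0 h0', by rw [← h, ← h']; ring⟩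
  mul_mem' := by
    rintro z z' ⟨x, hx, y, hy, h0, h⟩ ⟨x', hx', y', hy', h0', h'⟩
    exact ⟨x * x', mul_mem hx hx', y * y', mul_mem hy hy',
      mul_ne_zero h0 h0', by rw [← h, ← h']; ring⟩

lemma SignCompat.signCompat_fractions {G : Subring (R₁ × R₂)} (hG : SignCompat G) :
    SignCompat hG.fractions := by
  rintro z ⟨x, hx, y, hy, h0, h⟩
  have h0' : y.2 ≠ 0 := fun h => h0 ((hG.zero_iff hy).2 h)
  have h1 := hG _ (mul_mem hx hy)
  rw [← h] at h1
  simp only [Prod.fst_mul, Prod.snd_mul, mul_assoc] at h1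
  rwa [mul_pos_iff_of_pos_right (mul_self_pos.2 h0),
    mul_pos_iff_of_pos_right (mul_self_pos.2 h0')] at h1

/-- A sign-compatible subring extends to the graph of an order embedding `j` of a subfield `K` of
`R₁` into `R₂` which cannot be extended further. -/
lemma exists_maximal_embedding (G₀ : Subring (R₁ × R₂)) (h₀ : SignCompat G₀) :
    ∃ (K : Subfield R₁) (j : K →+* R₂), StrictMono j ∧
      (∀ x y, (x, y) ∈ G₀ → ∃ h : x ∈ K, j ⟨x, h⟩ = y) ∧
      ∀ α β, (∀ q : Polynomial K, 0 < q.eval₂ K.subtype α ↔ 0 < q.eval₂ j β) → α ∈ K := by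
  obtain ⟨G, hle, hG, hmax⟩ := exists_maximal_signCompat G₀ h₀
  have hinv : ∀ x y, (x, y) ∈ G → (x⁻¹, y⁻¹) ∈ G := by
    intro x y hxy
    by_cases hx : x = 0
    · have hy : y = 0 := (hG.zero_iff hxy).1 hx
      rw [hx, hy, inv_zero, inv_zero]
      exact zero_mem G
    have hy : y ≠ 0 := fun h => hx ((hG.zero_iff hxy).2 h)
    refine hmax _ hG.signCompat_fractions
      (fun z hz => ⟨z, hz, 1, one_mem _, by simp, by simp⟩) ⟨1, one_mem _, (x, y), hxy, hx, ?_⟩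
    ext <;> simp [hx, hy]
  let K : Subfield R₁ :=
    { carrier := {x | ∃ y, (x, y) ∈ G}
      zero_mem' := ⟨0, zero_mem G⟩
      one_mem' := ⟨1, one_mem G⟩
      neg_mem' := by rintro x ⟨y, h⟩; exact ⟨-y, neg_mem h⟩
      add_mem' := by rintro x x' ⟨y, h⟩ ⟨y', h'⟩; exact ⟨y + y', add_mem h h'⟩
      mul_mem' := by rintro x x' ⟨y, h⟩ ⟨y', h'⟩; exact ⟨y * y', mul_mem h h'⟩
      inv_mem' := by rintro x ⟨y, h⟩; exact ⟨y⁻¹, hinv x y h⟩ }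
  have hK : ∀ x : K, ∃ y, ((x : R₁), y) ∈ G := fun x => x.2
  choose jf hjf using hK
  let j : K →+* R₂ :=
    { toFun := jf
      map_zero' := hG.inj (hjf 0) (zero_mem G)
      map_one' := hG.inj (hjf 1) (one_mem G)
      map_add' := fun x y => hG.inj (hjf (x + y)) (add_mem (hjf x) (hjf y))
      map_mul' := fun x y => hG.inj (hjf (x * y)) (mul_mem (hjf x) (hjf y)) }
  have hj : ∀ x y (h : (x, y) ∈ G), j ⟨x, y, h⟩ = y := fun x y h => hG.inj (hjf ⟨x, y, h⟩) h
  refine ⟨K, j, ?_, ?_, ?_⟩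
  · intro x y hxy
    have := (hG _ (sub_mem (hjf y) (hjf x))).1 (sub_pos.2 hxy)
    exact sub_pos.1 this
  · intro x y h
    exact ⟨⟨y, hle h⟩, hj x y (hle h)⟩
  · intro α β hq
    let H := ((Polynomial.eval₂RingHom K.subtype α).prod (Polynomial.eval₂RingHom j β)).range
    have hH : SignCompat H := by
      rintro _ ⟨q, rfl⟩
      exact hq q
    have hGH : G ≤ H := by
      rintro ⟨x, y⟩ h
      refine ⟨Polynomial.C ⟨x, y, h⟩, ?_⟩
      have := hj x y h
      ext
      · simp
      · simpa using this
    exact ⟨β, hmax H hH hGH ⟨Polynomial.X, by simp⟩⟩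

/-- The domain of a maximal embedding is algebraically closed in `R₁`: by induction on the degree,
a root `α` of `q` has a partner `β`, and `α ↦ β` preserves the signs of all polynomials, since these
may be reduced modulo `q`. -/
lemma rootsIn_of_maximal (hR₁ : PolyIVT R₁) (hR₂ : PolyIVT R₂) (K : Subfield R₁) (j : K →+* R₂)
    (hj : StrictMono j)
    (hmax : ∀ α β, (∀ q : Polynomial K, 0 < q.eval₂ K.subtype α ↔ 0 < q.eval₂ j β) → α ∈ K)
    (q : Polynomial K) (hq : q ≠ 0) : RootsIn K.subtype q := by
  have hi : StrictMono K.subtype := fun x y h => h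
  induction hd : q.natDegree using Nat.strong_induction_on generalizing q with
  | _ d ih =>
  subst hd
  have ih' : ∀ r : Polynomial K, r ≠ 0 → r.natDegree < q.natDegree → RootsIn K.subtype r :=
    fun r hr hlt => ih _ hlt r hr rfl
  have ih2 : ∀ r : Polynomial K, r ≠ 0 → r.natDegree < q.natDegree → RootsIn j r :=
    fun r hr hlt => rootsIn_transfer hR₁ hR₂ K.subtype j hi hj _ ih' _ r hr hlt le_rfl
  intro α hα
  have h0 : q.natDegree ≠ 0 := by
    intro h0
    rw [Polynomial.eq_C_of_natDegree_eq_zero h0] at hα hq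
    simp only [Polynomial.eval₂_C] at hα
    rw [(map_eq_zero K.subtype).1 hα] at hq
    simp at hq
  have hdlt := Polynomial.natDegree_derivative_lt h0
  have hq' : q.derivative ≠ 0 := fun h => h0 (Polynomial.derivative_eq_zero.1 h)
  obtain ⟨β, hβ, hm⟩ := exists_partner_root hR₂ hR₁ j K.subtype hj hi q hq (ih2 _ hq' hdlt)
    (ih' _ hq' hdlt) hq' α hα
  refine ⟨⟨α, hmax α β fun f => ?_⟩, rfl⟩
  have hlt := Polynomial.natDegree_mod_lt f h0
  have e1 : f.eval₂ K.subtype α = (f % q).eval₂ K.subtype α := by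
    conv_lhs => rw [← EuclideanDomain.div_add_mod f q]
    rw [Polynomial.eval₂_add, Polynomial.eval₂_mul, hα, zero_mul, zero_add]
  have e2 : f.eval₂ j β = (f % q).eval₂ j β := by
    conv_lhs => rw [← EuclideanDomain.div_add_mod f q]
    rw [Polynomial.eval₂_add, Polynomial.eval₂_mul, hβ, zero_mul, zero_add]
  rw [e1, e2]
  by_cases hr : f % q = 0
  · simp [hr]
  exact (sign_of_cutMatch hR₂ hR₁ j K.subtype hj hi _ (ih2 _ hr hlt) (ih' _ hr hlt) β α hm).symm

end SignCompat

section Ultrapower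
variable {I : Type*} (U : Ultrafilter I) {R : Type*} [Field R] [LinearOrder R]
  [IsStrictOrderedRing R]

/-- The diagonal embedding into an ultrapower. -/
def germConst : R →+* (U : Filter I).Germ R :=
  (Filter.Germ.coeRingHom (U : Filter I)).comp (Pi.constRingHom I R)

lemma germConst_strictMono : StrictMono (germConst U : R →+* (U : Filter I).Germ R) :=
  fun _ _ h => Filter.Germ.const_lt h

lemma polyIVT_germ (hR : PolyIVT R) : PolyIVT ((U : Filter I).Germ R) := by
  intro f a b hab hf
  have hsurj : Function.Surjective (Filter.Germ.coeRingHom (R := R) (U : Filter I)) :=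
    Quotient.mk_surjective
  obtain ⟨F, rfl⟩ := Polynomial.map_surjective _ hsurj f
  obtain ⟨a, rfl⟩ := hsurj a
  obtain ⟨b, rfl⟩ := hsurj b
  have hev : ∀ (x : I → R) s, (F.eval x) s = (F.map (Pi.evalRingHom (fun _ => R) s)).eval (x s) :=
    fun x s => (Polynomial.eval_map_apply (Pi.evalRingHom (fun _ => R) s) x).symm
  rw [Polynomial.eval_map_apply, Polynomial.eval_map_apply, ← map_mul] at hf
  have h1 : ∀ᶠ s in (U : Filter I), a s < b s := Filter.Germ.coe_lt.1 hab
  have h2 : ∀ᶠ s in (U : Filter I), F.eval a s * F.eval b s < 0 :=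
    Filter.Germ.coe_lt.1 (show Filter.Germ.ofFun (F.eval a * F.eval b) < Filter.Germ.ofFun 0
      from hf)
  have h3 : ∀ s, ∃ c : R, (a s < b s ∧ F.eval a s * F.eval b s < 0) →
      a s < c ∧ c < b s ∧ (F.map (Pi.evalRingHom (fun _ => R) s)).eval c = 0 := by
    intro s
    by_cases h : a s < b s ∧ F.eval a s * F.eval b s < 0
    · obtain ⟨c, hc⟩ := hR (F.map (Pi.evalRingHom (fun _ => R) s)) (a s) (b s) h.1
        (by rw [← hev, ← hev]; exact h.2)
      exact ⟨c, fun _ => hc⟩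
    · exact ⟨0, fun h' => absurd h' h⟩
  choose c hc using h3
  refine ⟨Filter.Germ.coeRingHom _ c, Filter.Germ.coe_lt.2 ?_, Filter.Germ.coe_lt.2 ?_, ?_⟩
  · filter_upwards [h1, h2] with s hs1 hs2 using (hc s ⟨hs1, hs2⟩).1
  · filter_upwards [h1, h2] with s hs1 hs2 using (hc s ⟨hs1, hs2⟩).2.1
  · rw [Polynomial.eval_map_apply]
    refine Filter.Germ.coe_eq.2 ?_
    filter_upwards [h1, h2] with s hs1 hs2
    rw [hev]; exact (hc s ⟨hs1, hs2⟩).2.2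

/-- Solvability of the system `g ≥ 0` descends from an ultrapower. -/
lemma solution_of_germ {A : Type*} [CommRing A] {n m : ℕ} (c : A →+* R)
    (g : Fin m → MvPolynomial (Fin n) A)
    (h : ∃ y : Fin n → (U : Filter I).Germ R, ∀ k, 0 ≤ (g k).eval₂ ((germConst U).comp c) y) :
    ∃ y : Fin n → R, ∀ k, 0 ≤ (g k).eval₂ c y := by
  obtain ⟨y, hy⟩ := h
  have hsurj : Function.Surjective (Filter.Germ.coeRingHom (R := R) (U : Filter I)) :=
    Quotient.mk_surjective
  choose y' hy' using fun k => hsurj (y k)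
  obtain rfl : y = (Filter.Germ.coeRingHom (R := R) (U : Filter I)) ∘ y' := funext fun k =>
    (hy' k).symm
  have h1 : ∀ k, ∀ᶠ s in (U : Filter I), 0 ≤ (g k).eval₂ c (fun l => y' l s) := by
    intro k
    have h2 := hy k
    rw [show (germConst U).comp c = (Filter.Germ.coeRingHom (R := R) (U : Filter I)).comp
      ((Pi.constRingHom I R).comp c) from rfl, ← eval₂_comp_left] at h2
    have h3 : ∀ᶠ s in (U : Filter I), 0 ≤ (g k).eval₂ ((Pi.constRingHom I R).comp c) y' s :=
      Filter.Germ.coe_le.1 (show Filter.Germ.ofFun 0 ≤ Filter.Germ.ofFun _ from h2)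
    filter_upwards [h3] with s hs
    have := eval₂_comp_left (Pi.evalRingHom (fun _ => R) s) ((Pi.constRingHom I R).comp c) y' (g k)
    rw [Pi.evalRingHom_apply] at this
    rw [this] at hs
    exact hs
  obtain ⟨s, hs⟩ := (Filter.eventually_all.2 h1).exists
  exact ⟨fun l => y' l s, hs⟩
end Ultrapower

section Extension
variable {R₁ R₂ : Type} [Field R₁] [LinearOrder R₁] [IsStrictOrderedRing R₁]
  [Field R₂] [LinearOrder R₂] [IsStrictOrderedRing R₂]

/-- After passing to an ultrapower of `R₂`, a sign-compatible subring extends to one having a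
prescribed element of `R₁` in its domain. -/
lemma exists_extension (hR₁ : PolyIVT R₁) (hR₂ : PolyIVT R₂) (G : Subring (R₁ × R₂))
    (hG : SignCompat G) (α : R₁) :
    ∃ (I : Type) (U : Ultrafilter I) (β : (U : Filter I).Germ R₂)
      (H : Subring (R₁ × (U : Filter I).Germ R₂)), SignCompat H ∧ (α, β) ∈ H ∧
      ∀ x y, (x, y) ∈ G → (x, germConst U y) ∈ H := by
  obtain ⟨K, j, hj, hGK, hmax⟩ := exists_maximal_embedding G hG
  have hroots := rootsIn_of_maximal hR₁ hR₂ K j hj hmax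
  have hi : StrictMono K.subtype := fun x y h => h
  -- an ultrapower along the finite subsets of `K` realizes the cut of `α`
  let U : Ultrafilter (Finset K) := Ultrafilter.of Filter.atTop
  let j' : K →+* (U : Filter (Finset K)).Germ R₂ := (germConst U).comp j
  have hj' : StrictMono j' := (germConst_strictMono U).comp hj
  have hβ : ∃ β, CutMatch K.subtype j' α β := by
    classical
    by_cases hα : α ∈ K
    · exact ⟨j' ⟨α, hα⟩, fun c => ⟨by rw [hj'.lt_iff_lt]; rfl, by rw [hj'.lt_iff_lt]; rfl⟩⟩
    have h1 : ∀ s : Finset K, ∃ x : K, (∀ c ∈ s, (c : R₁) < α → c < x) ∧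
        ∀ c ∈ s, α < (c : R₁) → x < c := by
      intro s
      obtain ⟨x, hx1, hx2⟩ := Order.exists_between_finsets (s.filter fun z : K => K.subtype z < α)
        (s.filter fun z : K => α < K.subtype z) (by
          intro x hx y hy
          exact hi.lt_iff_lt.1 ((Finset.mem_filter.1 hx).2.trans (Finset.mem_filter.1 hy).2))
      exact ⟨x, fun c hc h => hx1 c (Finset.mem_filter.2 ⟨hc, h⟩),
        fun c hc h => hx2 c (Finset.mem_filter.2 ⟨hc, h⟩)⟩
    choose x hx1 hx2 using h1
    have hev : ∀ c : K, ∀ᶠ s in (U : Filter (Finset K)), c ∈ s := by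
      intro c
      have : ∀ᶠ s in (Filter.atTop : Filter (Finset K)), c ∈ s :=
        (Filter.eventually_ge_atTop {c}).mono fun s hs => hs (Finset.mem_singleton_self c)
      exact Ultrafilter.of_le _ this
    let β : (U : Filter (Finset K)).Germ R₂ := Filter.Germ.ofFun fun s => j (x s)
    have hl : ∀ c : K, (c : R₁) < α → j' c < β := by
      intro c hc
      refine Filter.Germ.coe_lt.2 ?_
      filter_upwards [hev c] with s hs using hj (hx1 s c hs hc)
    have hr : ∀ c : K, α < (c : R₁) → β < j' c := by
      intro c hc
      refine Filter.Germ.coe_lt.2 ?_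
      filter_upwards [hev c] with s hs using hj (hx2 s c hs hc)
    refine ⟨β, fun c => ?_⟩
    rcases lt_trichotomy (c : R₁) α with h | h | h
    · exact ⟨iff_of_true h (hl c h), iff_of_false (not_lt.2 h.le) (not_lt.2 (hl c h).le)⟩
    · exact absurd (h ▸ c.2) hα
    · exact ⟨iff_of_false (not_lt.2 h.le) (not_lt.2 (hr c h).le), iff_of_true h (hr c h)⟩
  obtain ⟨β, hβ⟩ := hβ
  have hR₃ := polyIVT_germ U hR₂
  refine ⟨Finset K, U, β,
    ((Polynomial.eval₂RingHom K.subtype α).prod (Polynomial.eval₂RingHom j' β)).range,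
    ?_, ⟨Polynomial.X, by simp⟩, ?_⟩
  · rintro _ ⟨q, rfl⟩
    by_cases hq : q = 0
    · simp [hq]
    exact sign_of_cutMatch hR₁ hR₃ K.subtype j' hi hj' q (hroots q hq)
      (rootsIn_transfer hR₁ hR₃ K.subtype j' hi hj' _ (fun q hq _ => hroots q hq) _ q hq
        (Nat.lt_succ_self _) le_rfl) α β hβ
  · intro x y hxy
    obtain ⟨hx, rfl⟩ := hGK x y hxy
    exact ⟨Polynomial.C ⟨x, hx⟩, by simp [j']⟩

end Extension

lemma polyIVT_real : PolyIVT ℝ := by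
  intro f a b hab hf
  have hcont : ContinuousOn (fun x => f.eval x) (Set.Icc a b) := f.continuous.continuousOn
  rcases mul_neg_iff.1 hf with ⟨h1, h2⟩ | ⟨h1, h2⟩
  · obtain ⟨c, hc, h⟩ := intermediate_value_Ioo' hab.le hcont (show (0 : ℝ) ∈ _ from ⟨h2, h1⟩)
    exact ⟨c, hc.1, hc.2, h⟩
  · obtain ⟨c, hc, h⟩ := intermediate_value_Ioo hab.le hcont (show (0 : ℝ) ∈ _ from ⟨h1, h2⟩)
    exact ⟨c, hc.1, hc.2, h⟩

/-- Transfer: a system of polynomial inequalities with real coefficients that is solvable in some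
real closed extension is solvable over the reals. -/
lemma real_solution_of_extension {n m : ℕ} (g : Fin m → MvPolynomial (Fin n) ℝ) (R : Type)
    [Field R] [LinearOrder R] [IsStrictOrderedRing R] (hR : PolyIVT R) (ι : ℝ →+* R)
    (x : Fin n → R) (hx : ∀ k, 0 ≤ (g k).eval₂ ι x) :
    ∃ y : Fin n → ℝ, ∀ k, 0 ≤ eval y (g k) := by
  -- positive reals are squares, so any ring homomorphism out of `ℝ` preserves the order
  have hι : StrictMono ι := by
    intro a b hab
    have h1 : ι (b - a) = ι (√(b - a)) * ι (√(b - a)) := by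
      rw [← map_mul, Real.mul_self_sqrt (sub_pos.2 hab).le]
    have h2 : ι (b - a) ≠ 0 := (map_ne_zero ι).2 (sub_pos.2 hab).ne'
    rw [← sub_pos, ← map_sub]
    refine lt_of_le_of_ne ?_ h2.symm
    rw [h1]; exact mul_self_nonneg _
  -- the coordinates of `x` are matched one at a time, in iterated ultrapowers `S` of `ℝ`
  have step : ∀ k : ℕ, k ≤ n → ∃ (S : Type) (_ : Field S) (_ : LinearOrder S)
      (_ : IsStrictOrderedRing S) (c : ℝ →+* S) (G : Subring (R × S)) (y : Fin n → S),
      PolyIVT S ∧ SignCompat G ∧ (∀ r, (ι r, c r) ∈ G) ∧ (∀ l : Fin n, l.1 < k → (x l, y l) ∈ G) ∧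
      ((∃ y : Fin n → S, ∀ k, 0 ≤ (g k).eval₂ c y) → ∃ y : Fin n → ℝ, ∀ k, 0 ≤ eval y (g k)) := by
    intro k
    induction k with
    | zero =>
      intro _
      refine ⟨ℝ, inferInstance, inferInstance, inferInstance, RingHom.id ℝ,
        (ι.prod (RingHom.id ℝ)).range, 0, polyIVT_real, ?_, fun r => ⟨r, rfl⟩, ?_, fun h => h⟩
      · rintro _ ⟨r, rfl⟩
        exact sign_map ι hι r
      · intro l hl; omega
    | succ k ih =>
      intro hk
      obtain ⟨S, _, _, _, c, G, y, hS, hG, hc, hy, htr⟩ := ih (by omega)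
      obtain ⟨I, U, β, H, hH, hβ, hGH⟩ := exists_extension hR hS G hG (x ⟨k, hk⟩)
      refine ⟨(U : Filter I).Germ S, inferInstance, inferInstance, inferInstance,
        (germConst U).comp c, H, fun l => if l.1 = k then β else germConst U (y l),
        polyIVT_germ U hS, hH, fun r => hGH _ _ (hc r), ?_,
        fun h => htr (solution_of_germ U c g h)⟩
      intro l hl
      dsimp only
      by_cases hlk : l.1 = k
      · rw [if_pos hlk]
        obtain rfl : l = ⟨k, hk⟩ := Fin.ext hlk
        exact hβ
      · rw [if_neg hlk]
        exact hGH _ _ (hy l (by omega))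
  obtain ⟨S, _, _, _, c, G, y, hS, hG, hc, hy, htr⟩ := step n le_rfl
  refine htr ⟨y, fun k => ?_⟩
  have hmem : ((g k).eval₂ ι x, (g k).eval₂ c y) ∈ G := by
    have : ∀ p : MvPolynomial (Fin n) ℝ, (p.eval₂ ι x, p.eval₂ c y) ∈ G := by
      intro p
      induction p using MvPolynomial.induction_on with
      | C r => simpa using hc r
      | add p q hp hq => simpa using add_mem hp hq
      | mul_X p l hp => simpa using mul_mem hp (hy l l.2)
    exact this _
  by_contra hneg
  have h1 := (hG _ (neg_mem hmem)).2 (by simpa using hneg)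
  simp only [Prod.neg_mk, Left.neg_pos_iff] at h1
  exact absurd (hx k) (not_le.2 h1)

/-- The Positivstellensatz: a proper preordering of `ℝ[X₁,…,Xₙ]` containing `g₁,…,g_m` has
`K_S ≠ ∅`. -/
lemma positivstellensatz {n m : ℕ} (g : Fin m → MvPolynomial (Fin n) ℝ)
    (T : Subsemiring (MvPolynomial (Fin n) ℝ)) (hsq : ∀ a, a * a ∈ T) (hg : ∀ k, g k ∈ T)
    (hT : (-1 : MvPolynomial (Fin n) ℝ) ∉ T) : ∃ y : Fin n → ℝ, ∀ k, 0 ≤ eval y (g k) := by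
  obtain ⟨F, _, _, _, φ, hφ⟩ := exists_ordered_field T hsq hT
  obtain ⟨R, _, _, _, ι, hι, hR⟩ := exists_polyIVT_extension F
  let ψ : MvPolynomial (Fin n) ℝ →+* R := ι.comp φ
  refine real_solution_of_extension g R hR (ψ.comp C) (fun l => ψ (X l)) fun k => ?_
  have : (g k).eval₂ (ψ.comp C) (fun l => ψ (X l)) = ψ (g k) := by
    rw [← eval₂_eta (g k), eval₂_comp_left]; simp [Function.comp_def]
  rw [this]
  exact hι _ (hφ _ (hg k))

/-! ### Nonnegativity of positive functionals on polynomials -/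

section Cone
variable {E : Type*} [CommRing E] {m : ℕ}

lemma genPreordering_add (g : Fin m → E) {a b : E} (ha : a ∈ genPreordering g)
    (hb : b ∈ genPreordering g) : a + b ∈ genPreordering g := by
  obtain ⟨σ, hσ, rfl⟩ := ha
  obtain ⟨τ, hτ, rfl⟩ := hb
  exact ⟨σ + τ, fun ν => (hσ ν).add (hτ ν), by
    rw [← Finset.sum_add_distrib]
    exact Finset.sum_congr rfl fun ν _ => by rw [Pi.add_apply, add_mul]⟩

lemma genPreordering_term (g : Fin m → E) (ν : Fin m → Bool) {s : E} (hs : IsSumSq s) :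
    s * ∏ j, (if ν j then g j else 1) ∈ genPreordering g := by
  classical
  refine ⟨Pi.single ν s, fun μ => ?_, ?_⟩
  · by_cases h : μ = ν
    · subst h; simpa using hs
    · rw [Pi.single_eq_of_ne h]; exact IsSumSq.zero
  · rw [Finset.sum_eq_single ν]
    · simp
    · intro μ _ h; rw [Pi.single_eq_of_ne h, zero_mul]
    · intro h; exact absurd (Finset.mem_univ _) h

/-- The generated preordering as an additive submonoid. -/
def genAdd (g : Fin m → E) : AddSubmonoid E where
  carrier := genPreordering g
  zero_mem' := by simpa using genPreordering_term g (fun _ => false) IsSumSq.zero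
  add_mem' := genPreordering_add g

/-- The generated preordering as a subsemiring. -/
def genCone (g : Fin m → E) : Subsemiring E where
  __ := genAdd g
  one_mem' := by
    change (1 : E) ∈ genPreordering g
    simpa using genPreordering_term g (fun _ => false) (IsSumSq.mul_self (1 : E))
  mul_mem' := by
    rintro _ _ ⟨σ, hσ, rfl⟩ ⟨τ, hτ, rfl⟩
    change _ ∈ genAdd g
    rw [Finset.sum_mul_sum]
    refine sum_mem fun ν _ => sum_mem fun μ _ => ?_
    -- `∏_ν ∏_μ` is the square of the common factors times the product over `ν xor μ`
    have h : σ ν * (∏ j, if ν j then g j else 1) * (τ μ * ∏ j, if μ j then g j else 1)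
        = (σ ν * τ μ * ((∏ j, if (ν j && μ j) then g j else 1) *
          (∏ j, if (ν j && μ j) then g j else 1))) * ∏ j, if (ν j ^^ μ j) then g j else 1 := by
      have h2 : (∏ j, if ν j then g j else 1) * (∏ j, if μ j then g j else 1) =
          ((∏ j, if (ν j && μ j) then g j else 1) *
          (∏ j, if (ν j && μ j) then g j else 1)) * ∏ j, if (ν j ^^ μ j) then g j else 1 := by
        simp only [← Finset.prod_mul_distrib]
        refine Finset.prod_congr rfl fun j _ => ?_
        cases ν j <;> cases μ j <;> simp
      linear_combination σ ν * τ μ * h2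
    rw [h]
    exact genPreordering_term g (fun j => ν j ^^ μ j)
      (((hσ ν).mul (hτ μ)).mul (IsSumSq.mul_self _))

lemma mem_genCone {g : Fin m → E} {x : E} : x ∈ genCone g ↔ x ∈ genPreordering g := Iff.rfl

lemma sq_mem_genCone (g : Fin m → E) (a : E) : a * a ∈ genCone g := by
  have := genPreordering_term g (fun _ => false) (IsSumSq.mul_self a)
  rw [mem_genCone]; simpa using this

lemma gen_mem_genCone (g : Fin m → E) (i : Fin m) : g i ∈ genCone g := by
  have := genPreordering_term g (fun j => decide (j = i)) (IsSumSq.mul_self 1)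
  rw [mem_genCone]; simpa using this
end Cone

/-- Let `y = v²`, with `u (1 - y)` and `u - 1` in the preordering `T`. Then `L y ≤ L 1` for every
functional `L ≥ 0` on `T`: the moments `L (yʲ)` form a convex sequence bounded by `L u`, which must
decrease. -/
lemma functional_sq_le {E : Type*} [CommRing E] (T : Subsemiring E) (hsq : ∀ a, a * a ∈ T)
    (L : E →+ ℝ) (hL : ∀ t ∈ T, 0 ≤ L t) (v u : E) (h1 : u * (1 - v * v) ∈ T)
    (h2 : u - 1 ∈ T) : L (v * v) ≤ L 1 := by
  have hpow : ∀ j : ℕ, (v * v) ^ j ∈ T := fun j => T.pow_mem (hsq v) j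
  have hbound : ∀ j : ℕ, L ((v * v) ^ j) ≤ L u := by
    intro j
    have e1 := hL _ (T.mul_mem h2 (hpow j))
    have e2 : u * (1 - (v * v) ^ j) ∈ T := by
      have : 1 - (v * v) ^ j = (1 - v * v) * ∑ i ∈ Finset.range j, (v * v) ^ i := by
        rw [mul_neg_geom_sum]
      rw [this, ← mul_assoc]
      exact T.mul_mem h1 (T.sum_mem fun i _ => hpow i)
    have e3 := hL _ e2
    have e4 : L ((u - 1) * (v * v) ^ j) + L (u * (1 - (v * v) ^ j)) = L u - L ((v * v) ^ j) := by
      rw [← map_add, ← map_sub]; congr 1; ring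
    linarith
  have hconv : ∀ j : ℕ, 0 ≤ L ((v * v) ^ j) - 2 * L ((v * v) ^ (j + 1)) + L ((v * v) ^ (j + 2)) := by
    intro j
    have e1 := hL _ (T.mul_mem (hpow j) (hsq (1 - v * v)))
    have e2 : (v * v) ^ j * ((1 - v * v) * (1 - v * v)) =
        (v * v) ^ j - ((v * v) ^ (j + 1) + (v * v) ^ (j + 1)) + (v * v) ^ (j + 2) := by ring
    rw [e2, map_add, map_sub, map_add] at e1
    linarith
  by_contra hlt
  rw [not_le] at hlt
  set δ := L (v * v) - L 1 with hδ
  have hδ0 : 0 < δ := by linarith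
  have hinc : ∀ j : ℕ, δ ≤ L ((v * v) ^ (j + 1)) - L ((v * v) ^ j) := by
    intro j
    induction j with
    | zero => simp [hδ]
    | succ j ih => have := hconv j; linarith
  have hgrow : ∀ j : ℕ, L 1 + j * δ ≤ L ((v * v) ^ j) := by
    intro j
    induction j with
    | zero => simp
    | succ j ih => have := hinc j; push_cast; linarith
  obtain ⟨j, hj⟩ := exists_nat_gt ((L u - L 1) / δ)
  rw [div_lt_iff₀ hδ0] at hj
  linarith [hgrow j, hbound j]

section PosKS
variable {n m : ℕ} {E : Type*} [CommRing E] (φ : MvPolynomial (Fin n) ℝ →+* E)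
  (g : Fin m → MvPolynomial (Fin n) ℝ)

/-- The certificate `s f = 1 + t` for a polynomial `f` that is positive on `K_S`. -/
lemma exists_certificate (f : MvPolynomial (Fin n) ℝ) (hf : ∀ x ∈ KS g, 0 < eval x f) :
    ∃ s t, φ s ∈ genCone (fun i => φ (g i)) ∧ φ t ∈ genCone (fun i => φ (g i)) ∧
      s * f = 1 + t := by
  let T := (genCone (fun i => φ (g i))).comap φ
  have hsq : ∀ a, a * a ∈ T := fun a => by
    change φ (a * a) ∈ genCone (fun i => φ (g i))
    rw [map_mul]; exact sq_mem_genCone _ _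
  have hneg : (-1 : MvPolynomial (Fin n) ℝ) ∈ adjoinCone T hsq (-f) := by
    by_contra hcon
    obtain ⟨y, hy⟩ := positivstellensatz (Fin.cons (-f) g : Fin (m + 1) → MvPolynomial (Fin n) ℝ)
      (adjoinCone T hsq (-f)) (fun a => le_adjoinCone _ _ _ (hsq a)) (by
        intro k
        refine Fin.cases ?_ (fun i => ?_) k
        · exact mem_adjoinCone_self _ _ _
        · exact le_adjoinCone _ _ _ (gen_mem_genCone (fun i => φ (g i)) i)) hcon
    have h0 := hy 0
    simp only [Fin.cons_zero, map_neg] at h0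
    have := hf y fun i => by simpa using hy i.succ
    linarith
  obtain ⟨t, ht, s, hs, h⟩ := hneg
  exact ⟨s, t, hs, ht, by linear_combination h⟩

/-- On `K_S` every polynomial is dominated by some `λ p^M`. -/
lemma exists_bound (p : MvPolynomial (Fin n) ℝ) (k : ℕ)
    (hp1 : ∀ x ∈ KS g, 1 ≤ eval x p)
    (hpgrow : ∀ x ∈ KS g, ∑ i, (x i) ^ 2 ≤ (k : ℝ) * eval x p) (f : MvPolynomial (Fin n) ℝ) :
    ∃ (c : ℝ) (M : ℕ), 1 ≤ c ∧ ∀ x ∈ KS g, |eval x f| ≤ c * eval x p ^ M := by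
  induction f using MvPolynomial.induction_on with
  | C r => exact ⟨|r| + 1, 0, by linarith [abs_nonneg r], fun x _ => by simp⟩
  | add f h hf hh =>
    obtain ⟨c, M, hc, hf⟩ := hf
    obtain ⟨d, N, hd, hh⟩ := hh
    refine ⟨c + d, M + N, by linarith, fun x hx => ?_⟩
    have h1 := hp1 x hx
    have e1 : eval x p ^ M ≤ eval x p ^ (M + N) := pow_le_pow_right₀ h1 (by omega)
    have e2 : eval x p ^ N ≤ eval x p ^ (M + N) := pow_le_pow_right₀ h1 (by omega)
    rw [map_add]
    refine (abs_add_le _ _).trans ?_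
    nlinarith [hf x hx, hh x hx]
  | mul_X f i hf =>
    obtain ⟨c, M, hc, hf⟩ := hf
    refine ⟨c * (k + 1), M + 1, by nlinarith [(Nat.cast_nonneg k : (0 : ℝ) ≤ k)], fun x hx => ?_⟩
    have h1 := hp1 x hx
    have hk : (0 : ℝ) ≤ k := Nat.cast_nonneg k
    have h2 : x i ^ 2 ≤ k * eval x p :=
      (Finset.single_le_sum (f := fun i => x i ^ 2) (fun i _ => sq_nonneg _)
        (Finset.mem_univ i)).trans (hpgrow x hx)
    have h3 : |x i| ≤ (k + 1) * eval x p := by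
      refine abs_le_of_sq_le_sq (h2.trans ?_) (by positivity)
      nlinarith [mul_nonneg hk (sub_nonneg.2 h1)]
    rw [map_mul, eval_X, abs_mul]
    have h4 := hf x hx
    calc |eval x f| * |x i| ≤ (c * eval x p ^ M) * ((k + 1) * eval x p) :=
          mul_le_mul h4 h3 (abs_nonneg _) ((abs_nonneg _).trans h4)
      _ = _ := by ring

/-- Positive functionals are nonnegative on polynomials that are positive on `K_S`. After
normalization by a power of `p`, the element `F = f / ζ²` takes values in `(0, 2)` on `K_S`, so
`functional_sq_le` applies to `v = 1 - F` and gives `2 L F ≥ L (F²) ≥ 0`. -/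
lemma functional_nonneg_of_pos (p : MvPolynomial (Fin n) ℝ) (hpu : IsUnit (φ p)) (k : ℕ)
    (hp1 : ∀ x ∈ KS g, 1 ≤ eval x p)
    (hpgrow : ∀ x ∈ KS g, ∑ i, (x i) ^ 2 ≤ (k : ℝ) * eval x p)
    (L : E →+ ℝ) (hL : ∀ t ∈ genCone (fun i => φ (g i)), 0 ≤ L t)
    (f : MvPolynomial (Fin n) ℝ) (hf : ∀ x ∈ KS g, 0 < eval x f) : 0 ≤ L (φ f) := by
  set T := genCone (fun i => φ (g i)) with hT
  have hsq : ∀ a, a * a ∈ T := sq_mem_genCone _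
  obtain ⟨c, M, hc, hb⟩ := exists_bound g p k hp1 hpgrow f
  let ζ : MvPolynomial (Fin n) ℝ := C c * p ^ M
  have hζu : IsUnit (φ ζ) := by
    rw [map_mul, map_pow]
    refine IsUnit.mul ?_ (hpu.pow M)
    exact ((isUnit_iff_ne_zero.2 (by linarith : c ≠ 0)).map C).map φ
  obtain ⟨w, hw⟩ := hζu.exists_left_inv
  obtain ⟨s, t, hs, ht, hst⟩ := exists_certificate φ g f hf
  obtain ⟨s', t', hs', ht', hst'⟩ := exists_certificate φ g (2 * (ζ * ζ) - f) (by
    intro x hx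
    have h1 : eval x ζ = c * eval x p ^ M := by simp [ζ]
    have h2 : 1 ≤ eval x ζ := by
      rw [h1]; exact one_le_mul_of_one_le_of_one_le hc (one_le_pow₀ (hp1 x hx))
    have h3 := (le_abs_self _).trans (hb x hx)
    rw [← h1] at h3
    simp only [map_sub, map_mul, map_ofNat]
    nlinarith)
  -- `F` is the normalized element `f / ζ²`, with `0 < F < 2` on `K_S`
  let F := φ f * (w * w)
  let u := (1 + φ t) * (1 + φ t')
  have e1 : φ s * φ f = 1 + φ t := by rw [← map_mul, hst, map_add, map_one]
  have e2 : φ s' * (2 * (φ ζ * φ ζ) - φ f) = 1 + φ t' := by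
    have := congrArg φ hst'
    simpa only [map_mul, map_sub, map_ofNat, map_add, map_one] using this
  have key : ∀ L' : E →+ ℝ, (∀ t ∈ T, 0 ≤ L' t) → 0 ≤ L' F := by
    intro L' hL'
    have h1 := functional_sq_le T hsq L' hL' (1 - F) u (by
      have : u * (1 - (1 - F) * (1 - F)) = (φ s * φ s') *
          ((φ f * (2 * (φ ζ * φ ζ) - φ f) * (w * w)) *
           (φ f * (2 * (φ ζ * φ ζ) - φ f) * (w * w))) := by
        have h3 : F * (2 - F) = φ f * (2 * (φ ζ * φ ζ) - φ f) * ((w * w) * (w * w)) := by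
          simp only [F]
          linear_combination (-2 * φ f * w * w * (w * φ ζ + 1)) * hw
        simp only [u]
        rw [← e1, ← e2]
        linear_combination (φ s * φ f * (φ s' * (2 * (φ ζ * φ ζ) - φ f))) * h3
      rw [this]
      exact T.mul_mem (T.mul_mem hs hs') (hsq _)) (by
      have : u - 1 = φ t + φ t' + φ t * φ t' := by simp only [u]; ring
      rw [this]
      exact T.add_mem (T.add_mem ht ht') (T.mul_mem ht ht'))
    have h2 := hL' _ (hsq F)
    have h3 : (1 - F) * (1 - F) = 1 - (F + F) + F * F := by ring
    rw [h3, map_add, map_sub, map_add] at h1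
    linarith
  -- multiplication by `ζ²` preserves the preordering and turns `F` back into `f`
  have h := key (L.comp (AddMonoidHom.mulLeft (φ ζ * φ ζ))) (fun t ht =>
    hL _ (T.mul_mem (hsq _) ht))
  have h5 : φ ζ * φ ζ * F = φ f := by
    simp only [F]
    linear_combination (φ f * (w * φ ζ + 1)) * hw
  simpa [h5] using h

/-- Positive functionals are nonnegative on `f e²` when `f ≥ 0` on `K_S`. -/
lemma functional_nonneg (p : MvPolynomial (Fin n) ℝ) (hpu : IsUnit (φ p)) (k : ℕ)
    (hp1 : ∀ x ∈ KS g, 1 ≤ eval x p)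
    (hpgrow : ∀ x ∈ KS g, ∑ i, (x i) ^ 2 ≤ (k : ℝ) * eval x p)
    (L : E →+ ℝ) (hL : ∀ t ∈ genCone (fun i => φ (g i)), 0 ≤ L t)
    (f : MvPolynomial (Fin n) ℝ) (hf : ∀ x ∈ KS g, 0 ≤ eval x f) (e : E) :
    0 ≤ L (φ f * (e * e)) := by
  -- `N f + 1 > 0` on `K_S` for every `N`
  have key : ∀ N : ℕ, 0 ≤ N * L (φ f * (e * e)) + L (e * e) := by
    intro N
    have := functional_nonneg_of_pos φ g p hpu k hp1 hpgrow
      (L.comp (AddMonoidHom.mulRight (e * e)))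
      (fun t ht => hL _ (Subsemiring.mul_mem _ ht (sq_mem_genCone _ e))) (N • f + 1) (by
        intro x hx
        simp only [map_add, map_one, nsmul_eq_mul, map_mul, map_natCast]
        have := mul_nonneg (Nat.cast_nonneg N) (hf x hx)
        linarith)
    simpa [add_mul, mul_assoc, ← nsmul_eq_mul] using this
  by_contra hneg
  rw [not_le] at hneg
  obtain ⟨N, hN⟩ := exists_nat_gt (L (e * e) / -L (φ f * (e * e)))
  rw [div_lt_iff₀ (by linarith)] at hN
  linarith [key N]
end PosKS

/-! ### Riesz extension and the representing measure -/

open CompactlySupported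

section Extension
variable {n : ℕ} {E : Type*} [CommRing E] [Algebra ℝ E]

/-- Data `h, d` witnessing that, on `K`, the fraction `e = h / d²` dominates `ψ`. -/
def Dominates (φ : MvPolynomial (Fin n) ℝ →ₐ[ℝ] E) (D : Submonoid (MvPolynomial (Fin n) ℝ))
    (K : Set (Fin n → ℝ)) (e : E) (ψ : C_c(Fin n → ℝ, ℝ)) : Prop :=
  ∃ h : MvPolynomial (Fin n) ℝ, ∃ d ∈ D, φ h = φ d * φ d * e ∧
    ∀ x ∈ K, ψ x * (eval x d) ^ 2 ≤ eval x h

variable {φ : MvPolynomial (Fin n) ℝ →ₐ[ℝ] E} {D : Submonoid (MvPolynomial (Fin n) ℝ)}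
  {K : Set (Fin n → ℝ)}

lemma Dominates.add {e₁ e₂ : E} {ψ₁ ψ₂ : C_c(Fin n → ℝ, ℝ)} (h₁ : Dominates φ D K e₁ ψ₁)
    (h₂ : Dominates φ D K e₂ ψ₂) : Dominates φ D K (e₁ + e₂) (ψ₁ + ψ₂) := by
  obtain ⟨a, d, hd, he, hK⟩ := h₁
  obtain ⟨a', d', hd', he', hK'⟩ := h₂
  refine ⟨a * (d' * d') + a' * (d * d), d * d', D.mul_mem hd hd', ?_, fun x hx => ?_⟩
  · simp only [map_add, map_mul, he, he']; ring
  · have h1 := mul_le_mul_of_nonneg_right (hK x hx) (mul_self_nonneg (eval x d'))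
    have h2 := mul_le_mul_of_nonneg_right (hK' x hx) (mul_self_nonneg (eval x d))
    simp only [map_add, map_mul, CompactlySupportedContinuousMap.coe_add, Pi.add_apply]
    nlinarith

lemma Dominates.smul {e : E} {ψ : C_c(Fin n → ℝ, ℝ)} (h : Dominates φ D K e ψ) {c : ℝ}
    (hc : 0 ≤ c) : Dominates φ D K (c • e) (c • ψ) := by
  obtain ⟨a, d, hd, he, hK⟩ := h
  refine ⟨c • a, d, hd, ?_, fun x hx => ?_⟩
  · rw [map_smul, he, mul_smul_comm]
  · have h1 := mul_le_mul_of_nonneg_left (hK x hx) hc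
    simp only [CompactlySupportedContinuousMap.coe_smul, Pi.smul_apply, smul_eq_mul, smul_eval]
    linarith

/-- If `L` is nonnegative on fractions that are nonnegative on `K`, the Riesz extension theorem
extends it to `E × C_c(ℝⁿ)` monotonically. -/
lemma exists_functional_extension (hDu : ∀ d ∈ D, IsUnit (φ d)) (L : E →ₗ[ℝ] ℝ)
    (hL : ∀ h : MvPolynomial (Fin n) ℝ, (∀ x ∈ K, 0 ≤ eval x h) → ∀ e, 0 ≤ L (φ h * (e * e))) :
    ∃ Λ : C_c(Fin n → ℝ, ℝ) →ₗ[ℝ] ℝ, ∀ e ψ, Dominates φ D K e ψ → Λ ψ ≤ L e := by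
  let s : PointedCone ℝ (E × C_c(Fin n → ℝ, ℝ)) :=
    { carrier := {y | Dominates φ D K y.1 (-y.2)}
      zero_mem' := ⟨0, 1, D.one_mem, by simp, by simp⟩
      add_mem' := fun {a b} ha hb => by
        have := Dominates.add ha hb
        rwa [← neg_add] at this
      smul_mem' := fun c a ha => by
        have := Dominates.smul ha c.2
        have hneg : (c : ℝ) • (-a.2) = -((c : ℝ) • a.2) := by ext x; simp
        rw [hneg] at this
        exact this }
  let f : (E × C_c(Fin n → ℝ, ℝ)) →ₗ.[ℝ] ℝ :=
    { domain := Submodule.prod ⊤ ⊥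
      toFun := (L ∘ₗ LinearMap.fst ℝ _ _) ∘ₗ Submodule.subtype _ }
  have hnonneg : ∀ y : f.domain, (y : E × C_c(Fin n → ℝ, ℝ)) ∈ s → 0 ≤ f y := by
    rintro ⟨⟨e, ψ⟩, hy⟩ hs
    obtain rfl : ψ = 0 := by simpa [f] using hy
    obtain ⟨h, d, hd, he, hK⟩ := hs
    change 0 ≤ L e
    obtain ⟨u, hu⟩ := hDu d hd
    have h2 := hL h (fun x hx => by simpa using hK x hx) (↑u⁻¹ : E)
    rw [he, ← hu] at h2
    have h3 : (u * u * e * (↑u⁻¹ * ↑u⁻¹) : E) = e := by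
      have := u.mul_inv
      linear_combination e * ((u:E) * ↑u⁻¹ + 1) * this
    rwa [h3] at h2
  have hdense : ∀ y, ∃ x : f.domain, (x : E × C_c(Fin n → ℝ, ℝ)) + y ∈ s := by
    rintro ⟨e, ψ⟩
    obtain ⟨c, hc⟩ := ψ.continuous.bounded_above_of_compact_support ψ.hasCompactSupport
    refine ⟨⟨(-e + algebraMap ℝ E c, 0), by simp [f]⟩, ?_⟩
    refine ⟨C c, 1, D.one_mem, ?_, fun x _ => ?_⟩
    · rw [← MvPolynomial.algebraMap_eq, AlgHom.commutes]; simp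
    · have : ‖ψ x‖ ≤ c := hc x
      have h2 := neg_abs_le (ψ x)
      rw [Real.norm_eq_abs] at this
      simp
      linarith
  obtain ⟨G, hG, hGs⟩ := riesz_extension s f hnonneg hdense
  have key : ∀ e, G (e, 0) = L e := fun e => hG ⟨(e, 0), by simp [f]⟩
  refine ⟨G ∘ₗ LinearMap.inr ℝ _ _, fun e ψ h => ?_⟩
  have h0 : (0 : ℝ) ≤ G (e, -ψ) := hGs _ (by
    change Dominates φ D K e (- -ψ)
    rwa [neg_neg])
  have h1 : ((e, -ψ) : E × C_c(Fin n → ℝ, ℝ)) = (e, 0) - (0, ψ) := by simp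
  rw [h1, map_sub, key] at h0
  simpa using h0

/-- The measure provided by the Riesz–Markov–Kakutani theorem for the extension. -/
lemma exists_measure (hDu : ∀ d ∈ D, IsUnit (φ d)) (L : E →ₗ[ℝ] ℝ)
    (hL : ∀ h : MvPolynomial (Fin n) ℝ, (∀ x ∈ K, 0 ≤ eval x h) → ∀ e, 0 ≤ L (φ h * (e * e))) :
    ∃ μ : Measure (Fin n → ℝ), IsLocallyFiniteMeasure μ ∧
      ∀ e ψ, Dominates φ D K e ψ → ∫ x, ψ x ∂μ ≤ L e ∧
        ((∀ x, 0 ≤ ψ x) → ∀ B, IsCompact B → (∀ x ∈ B, ψ x = 1) → μ B ≤ ENNReal.ofReal (L e)) := by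
  obtain ⟨Λ, hΛ⟩ := exists_functional_extension hDu L hL
  let Λ' : C_c(Fin n → ℝ, ℝ) →ₚ[ℝ] ℝ := PositiveLinearMap.mk₀ Λ fun ψ hψ => by
    have := hΛ 0 (-ψ) ⟨0, 1, D.one_mem, by simp, fun x _ => by simpa using hψ x⟩
    simpa using this
  refine ⟨RealRMK.rieszMeasure Λ', inferInstance, fun e ψ h => ⟨?_, fun h0 B hB h1 => ?_⟩⟩
  · rw [RealRMK.integral_rieszMeasure]; exact hΛ e ψ h
  · exact (RealRMK.rieszMeasure_le_of_eq_one Λ' h0 hB h1).trans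
      (ENNReal.ofReal_le_ofReal (hΛ e ψ h))

end Extension

/-! ### Plateau functions and null sets -/

/-- A plateau function: `1` on the closed ball of radius `r`, `0` off the ball of radius `2r`. -/
def plateau {n : ℕ} (a : Fin n → ℝ) (r : ℝ) (hr : 0 < r) : C_c(Fin n → ℝ, ℝ) where
  toFun x := max 0 (min 1 (2 - dist x a / r))
  continuous_toFun := by fun_prop
  hasCompactSupport' := by
    refine HasCompactSupport.intro (isCompact_closedBall a (2 * r)) fun x hx => ?_
    rw [Metric.mem_closedBall, not_le] at hx
    refine max_eq_left ((min_le_right _ _).trans ?_)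
    rw [sub_nonpos, le_div_iff₀ hr]
    exact hx.le

section Plateau
variable {n : ℕ} {a : Fin n → ℝ} {r : ℝ} (hr : 0 < r)

lemma plateau_apply (x : Fin n → ℝ) :
    plateau a r hr x = max 0 (min 1 (2 - dist x a / r)) := rfl

lemma plateau_nonneg (x : Fin n → ℝ) : 0 ≤ plateau a r hr x := le_max_left _ _

lemma plateau_le_one (x : Fin n → ℝ) : plateau a r hr x ≤ 1 :=
  max_le zero_le_one (min_le_left _ _)

lemma plateau_eq_one {x : Fin n → ℝ} (hx : dist x a ≤ r) : plateau a r hr x = 1 := by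
  have h : dist x a / r ≤ 1 := (div_le_one hr).2 hx
  rw [plateau_apply, min_eq_left (by linarith), max_eq_right zero_le_one]

lemma plateau_eq_zero {x : Fin n → ℝ} (hx : 2 * r ≤ dist x a) : plateau a r hr x = 0 := by
  refine max_eq_left ((min_le_right _ _).trans ?_)
  rwa [sub_nonpos, le_div_iff₀ hr]

end Plateau

/-- A locally finite measure on `ℝⁿ` charges no set of points at which its balls of radius
`r ≤ 1` have measure `O(r^(2(n+1)))`, which is `o(rⁿ)`. -/
lemma measure_null_of_ball_growth {n : ℕ} (μ : Measure (Fin n → ℝ)) [IsLocallyFiniteMeasure μ]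
    (Y : Set (Fin n → ℝ))
    (hY : ∀ a ∈ Y, ∃ c : ℝ, ∀ r, 0 < r → r ≤ 1 →
      μ (Metric.closedBall a r) ≤ ENNReal.ofReal (c * r ^ (2 * (n + 1)))) :
    μ Y = 0 := by
  have key : ∀ ε : ℝ, 0 < ε → ∀ s ⊆ Y, μ s ≤ (ENNReal.ofReal ε • volume) s := by
    intro ε hε s hs
    have : IsLocallyFiniteMeasure (ENNReal.ofReal ε • (volume : Measure (Fin n → ℝ))) :=
      ⟨fun x => ⟨Metric.ball x 1, Metric.ball_mem_nhds x one_pos, by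
        rw [Measure.smul_apply, smul_eq_mul]
        exact ENNReal.mul_lt_top ENNReal.ofReal_lt_top measure_ball_lt_top⟩⟩
    refine (Besicovitch.vitaliFamily μ).measure_le_of_frequently_le _
      Measure.AbsolutelyContinuous.rfl s fun x hx => ?_
    obtain ⟨c, hc⟩ := hY x (hs hx)
    refine (Besicovitch.tendsto_filterAt μ x).frequently (Filter.Eventually.frequently ?_)
    have hpos : 0 < min 1 (ε / (|c| + 1)) := by positivity
    filter_upwards [Ioc_mem_nhdsGT hpos] with r hr
    have hr0 : 0 < r := hr.1
    have hr1 : r ≤ 1 := hr.2.trans (min_le_left _ _)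
    have hr2 : r * (|c| + 1) ≤ ε := (le_div_iff₀ (by positivity)).1 (hr.2.trans (min_le_right _ _))
    refine (hc r hr0 hr1).trans ?_
    rw [Measure.smul_apply, smul_eq_mul, Real.volume_pi_closedBall _ hr0.le,
      ← ENNReal.ofReal_mul hε.le, Fintype.card_fin]
    refine ENNReal.ofReal_le_ofReal ?_
    have h1 : c * r ^ (2 * (n + 1)) = c * r ^ (n + 2) * r ^ n := by ring
    have h2 : r ^ (n + 2) ≤ r := pow_le_of_le_one hr0.le hr1 (by omega)
    have h3 : c * r ^ (n + 2) ≤ ε := by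
      calc c * r ^ (n + 2) ≤ |c| * r ^ (n + 2) := by gcongr; exact le_abs_self c
        _ ≤ |c| * r := by gcongr
        _ ≤ ε := by linarith
    rw [h1]
    have h4 : r ^ n ≤ (2 * r) ^ n := by gcongr; linarith
    exact mul_le_mul h3 h4 (by positivity) hε.le
  have hcover : Y ⊆ ⋃ j : ℕ, Y ∩ Metric.ball 0 j := by
    intro x hx
    obtain ⟨j, hj⟩ := exists_nat_gt (dist x 0)
    exact Set.mem_iUnion.2 ⟨j, hx, hj⟩
  refine measure_mono_null hcover (measure_iUnion_null fun j => ?_)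
  have hfin : volume (Y ∩ Metric.ball (0 : Fin n → ℝ) j) < ⊤ :=
    (measure_mono Set.inter_subset_right).trans_lt measure_ball_lt_top
  set v := volume (Y ∩ Metric.ball (0 : Fin n → ℝ) j) with hv
  refine le_antisymm ?_ zero_le
  have hlim : Filter.Tendsto (fun ε : ℝ => ENNReal.ofReal ε * v)
      (nhdsWithin 0 (Set.Ioi 0)) (nhds 0) := by
    have h0 : Filter.Tendsto (fun ε : ℝ => ENNReal.ofReal ε) (nhdsWithin 0 (Set.Ioi 0))
        (nhds 0) := by
      have := (ENNReal.continuous_ofReal.tendsto 0).mono_left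
        (nhdsWithin_le_nhds (s := Set.Ioi (0 : ℝ)))
      simpa using this
    have := ENNReal.Tendsto.mul_const (b := v) h0 (Or.inr hfin.ne)
    simpa using this
  refine ge_of_tendsto hlim ?_
  filter_upwards [self_mem_nhdsWithin] with ε hε
  exact key ε hε _ Set.inter_subset_left

/-- A polynomial is Lipschitz at every point, on the ball of radius 2 around it. -/
lemma exists_lipschitz_at {n : ℕ} (d : MvPolynomial (Fin n) ℝ) (a : Fin n → ℝ) :
    ∃ M : ℝ, 0 ≤ M ∧ ∀ x, dist x a ≤ 2 → |eval x d - eval a d| ≤ M * dist x a := by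
  induction d using MvPolynomial.induction_on with
  | C c => exact ⟨0, le_rfl, by simp⟩
  | add p q hp hq =>
    obtain ⟨M, hM, h⟩ := hp
    obtain ⟨M', hM', h'⟩ := hq
    refine ⟨M + M', by positivity, fun x hx => ?_⟩
    rw [map_add, map_add, add_sub_add_comm, add_mul]
    exact (abs_add_le _ _).trans (add_le_add (h x hx) (h' x hx))
  | mul_X p i hp =>
    obtain ⟨M, hM, h⟩ := hp
    refine ⟨M * (|a i| + 2) + |eval a p|, by positivity, fun x hx => ?_⟩
    have hi : |x i - a i| ≤ dist x a := by
      rw [← Real.dist_eq]; exact dist_le_pi_dist x a i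
    have hxi : |x i| ≤ |a i| + 2 := by
      have := abs_add_le (x i - a i) (a i)
      rw [sub_add_cancel] at this
      linarith
    have e : eval x (p * X i) - eval a (p * X i)
        = (eval x p - eval a p) * x i + eval a p * (x i - a i) := by
      simp only [map_mul, eval_X]; ring
    rw [e]
    refine (abs_add_le _ _).trans ?_
    rw [abs_mul, abs_mul, add_mul]
    refine add_le_add ?_ (by gcongr)
    calc |eval x p - eval a p| * |x i| ≤ (M * dist x a) * (|a i| + 2) := by
          gcongr
          exact h x hx
      _ = _ := by ring

/-! ### Nonnegativity off the zeros of the denominators -/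

section Claim
variable {n : ℕ} {E : Type*} [CommRing E] [Algebra ℝ E]
  {φ : MvPolynomial (Fin n) ℝ →ₐ[ℝ] E} {D : Submonoid (MvPolynomial (Fin n) ℝ)}
  {K : Set (Fin n → ℝ)}

/-- Near a zero `a` of `d ∈ D`, the fraction `(2Mr)^(2N) / d^(2N)` with `N = n + 1` dominates the
plateau function of the ball of radius `r`. -/
lemma dominates_near_zero {d : MvPolynomial (Fin n) ℝ} (hd : d ∈ D) (u : Eˣ)
    (hu : (u : E) = φ (d ^ (n + 1))) {a : Fin n → ℝ} (ha : eval a d = 0) {M : ℝ} (hM : 0 ≤ M)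
    (hlip : ∀ x, dist x a ≤ 2 → |eval x d - eval a d| ≤ M * dist x a)
    {r : ℝ} (hr : 0 < r) (hr1 : r ≤ 1) :
    Dominates φ D K (((2 * M * r) ^ (2 * (n + 1))) • ((↑u⁻¹ : E) * (↑u⁻¹ : E)))
      (plateau a r hr) := by
  refine ⟨C ((2 * M * r) ^ (2 * (n + 1))), d ^ (n + 1), D.pow_mem hd _, ?_, fun x _ => ?_⟩
  · rw [MvPolynomial.algHom_C, ← hu, Algebra.smul_def]
    have := u.mul_inv
    linear_combination (-(algebraMap ℝ E ((2 * M * r) ^ (2 * (n + 1)))) *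
      ((u : E) * ↑u⁻¹ + 1)) * this
  · rw [eval_C, map_pow]
    by_cases hx : 2 * r ≤ dist x a
    · rw [plateau_eq_zero hr hx, zero_mul]
      positivity
    · push Not at hx
      have h1 := hlip x (by linarith)
      rw [ha, sub_zero] at h1
      have h2 : |eval x d| ≤ 2 * M * r := h1.trans (by nlinarith)
      have h3 : (eval x d ^ (n + 1)) ^ 2 ≤ (2 * M * r) ^ (2 * (n + 1)) := by
        calc (eval x d ^ (n + 1)) ^ 2 = |eval x d| ^ (2 * (n + 1)) := by
              rw [← sq_abs (eval x d ^ (n + 1)), abs_pow, ← pow_mul, mul_comm]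
          _ ≤ _ := by gcongr
      calc _ ≤ 1 * (eval x d ^ (n + 1)) ^ 2 := by
            gcongr; exact plateau_le_one hr x
        _ ≤ _ := by rwa [one_mul]

/-- A polynomial times a plateau function. -/
def cutoff (f : MvPolynomial (Fin n) ℝ) (R : ℝ) (hR : 0 < R) : C_c(Fin n → ℝ, ℝ) where
  toFun x := eval x f * plateau 0 R hR x
  continuous_toFun := (MvPolynomial.continuous_eval f).mul (map_continuous _)
  hasCompactSupport' := HasCompactSupport.mul_left (plateau 0 R hR).hasCompactSupport

/-- The error term `R⁻¹ (1 + f²) (1 + ∑ xᵢ²)` pays for the truncation of `f` outside the ball of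
radius `R`. -/
lemma dominates_cutoff (f : MvPolynomial (Fin n) ℝ) {R : ℝ} (hR : 0 < R) :
    Dominates φ D K (φ f + R⁻¹ • φ ((1 + f ^ 2) * (1 + ∑ i, X i ^ 2))) (cutoff f R hR) := by
  refine ⟨f + R⁻¹ • ((1 + f ^ 2) * (1 + ∑ i, X i ^ 2)), 1, D.one_mem, ?_, fun x _ => ?_⟩
  · rw [map_add, map_smul, map_one, one_mul, one_mul]
  · change eval x f * plateau 0 R hR x * _ ≤ _
    simp only [map_add, map_one, one_pow, mul_one, smul_eval, map_mul, map_pow, map_sum, eval_X]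
    set t := eval x f
    have hsum : 0 ≤ ∑ i, x i ^ 2 := Finset.sum_nonneg fun i _ => sq_nonneg _
    by_cases hx : dist x 0 ≤ R
    · rw [plateau_eq_one hR hx, mul_one]
      have : 0 ≤ R⁻¹ * ((1 + t ^ 2) * (1 + ∑ i, x i ^ 2)) := by positivity
      linarith
    · rw [dist_pi_le_iff hR.le] at hx
      push Not at hx
      obtain ⟨i, hi⟩ := hx
      rw [Pi.zero_apply, Real.dist_eq, sub_zero] at hi
      have h1 : x i ^ 2 ≤ ∑ i, x i ^ 2 :=
        Finset.single_le_sum (f := fun i => x i ^ 2) (fun i _ => sq_nonneg _) (Finset.mem_univ i)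
      have h2 : R ≤ 1 + ∑ i, x i ^ 2 := by
        rw [← sq_abs] at h1
        nlinarith
      have h3 : 1 ≤ R⁻¹ * (1 + ∑ i, x i ^ 2) := by
        rw [inv_mul_eq_div]; exact (one_le_div hR).2 h2
      have h4 : 1 + t ^ 2 ≤ R⁻¹ * ((1 + t ^ 2) * (1 + ∑ i, x i ^ 2)) := by
        have := mul_le_mul_of_nonneg_left h3 (by positivity : 0 ≤ 1 + t ^ 2)
        linarith
      have h5 := plateau_nonneg (a := 0) hR x
      have h6 := plateau_le_one (a := 0) hR x
      nlinarith [sq_nonneg (t + 1), sq_nonneg (t - 1), sq_nonneg t]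

/-- Nonnegativity off the zeros of the denominators suffices: the representing measure gives mass
zero to the complement of `K` and to the zeros of every `d ∈ D`. -/
lemma functional_nonneg_off_zeros (hDu : ∀ d ∈ D, IsUnit (φ d)) (hK : IsClosed K) (L : E →ₗ[ℝ] ℝ)
    (hL : ∀ h : MvPolynomial (Fin n) ℝ, (∀ x ∈ K, 0 ≤ eval x h) → ∀ e, 0 ≤ L (φ h * (e * e)))
    (f : MvPolynomial (Fin n) ℝ)
    (hf : ∀ x ∈ K, (∀ d ∈ D, eval x d ≠ 0) → 0 ≤ eval x f) : 0 ≤ L (φ f) := by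
  obtain ⟨μ, hμ, hdom⟩ := exists_measure hDu L hL
  have hKc : μ Kᶜ = 0 := by
    refine measure_null_of_locally_null _ fun a ha => ?_
    obtain ⟨δ, hδ, hball⟩ := Metric.isOpen_iff.1 hK.isOpen_compl a ha
    have hr : 0 < δ / 2 := by positivity
    refine ⟨Metric.closedBall a (δ / 2),
      mem_nhdsWithin_of_mem_nhds (Metric.closedBall_mem_nhds a hr), ?_⟩
    have hD : Dominates φ D K 0 (plateau a (δ / 2) hr) := by
      refine ⟨0, 1, D.one_mem, by simp, fun x hx => ?_⟩
      rw [plateau_eq_zero hr, zero_mul, map_zero]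
      by_contra! hlt
      exact hball (Metric.mem_ball.2 (by linarith : dist x a < δ)) hx
    have := (hdom _ _ hD).2 (plateau_nonneg hr) _ (isCompact_closedBall a _)
      fun x hx => plateau_eq_one hr hx
    simpa using this
  have hZ : μ {x | ∃ d ∈ D, eval x d = 0} = 0 := by
    refine measure_null_of_ball_growth μ _ ?_
    rintro a ⟨d, hd, ha⟩
    obtain ⟨M, hM, hlip⟩ := exists_lipschitz_at d a
    obtain ⟨u, hu⟩ := hDu _ (D.pow_mem hd (n + 1))
    refine ⟨(2 * M) ^ (2 * (n + 1)) * L ((↑u⁻¹ : E) * (↑u⁻¹ : E)), fun r hr hr1 => ?_⟩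
    have := (hdom _ _ (dominates_near_zero hd u hu ha hM hlip hr hr1)).2 (plateau_nonneg hr) _
      (isCompact_closedBall a r) fun x hx => plateau_eq_one hr hx
    rw [map_smul, smul_eq_mul, mul_pow _ r, mul_right_comm] at this
    exact this
  have hintegral : ∀ R, ∀ hR : 0 < R, 0 ≤ ∫ x, cutoff f R hR x ∂μ := by
    intro R hR
    refine integral_nonneg_of_ae ?_
    have h1 : ∀ᵐ x ∂μ, x ∈ K := hKc
    have h2 : ∀ᵐ x ∂μ, ¬ ∃ d ∈ D, eval x d = 0 := by
      rw [ae_iff]; simpa using hZ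
    filter_upwards [h1, h2] with x hx1 hx2
    push Not at hx2
    exact mul_nonneg (hf x hx1 hx2) (plateau_nonneg hR x)
  set q := L (φ ((1 + f ^ 2) * (1 + ∑ i, X i ^ 2)))
  have hq : ∀ R : ℝ, 1 ≤ R → 0 ≤ L (φ f) + R⁻¹ * q := by
    intro R hR1
    have hR : 0 < R := by linarith
    have h := (hintegral R hR).trans (hdom _ _ (dominates_cutoff f hR)).1
    rwa [map_add, map_smul, smul_eq_mul] at h
  by_contra! hneg
  have hR1 : 1 ≤ 1 + |q| / -L (φ f) := by
    have : 0 ≤ |q| / -L (φ f) := div_nonneg (abs_nonneg _) (by linarith)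
    linarith
  have h := hq _ hR1
  set R := 1 + |q| / -L (φ f) with hRdef
  have hR : 0 < R := by linarith
  have h2 : 0 ≤ R * L (φ f) + q := by
    have := mul_nonneg hR.le h
    rwa [mul_add, mul_inv_cancel_left₀ hR.ne'] at this
  have h3 : R * L (φ f) = L (φ f) - |q| := by
    rw [hRdef]
    have : L (φ f) ≠ 0 := hneg.ne
    field_simp
    ring
  linarith [le_abs_self q]

end Claim

lemma isClosed_KS {n m : ℕ} (g : Fin m → MvPolynomial (Fin n) ℝ) : IsClosed (KS g) := by
  have : KS g = ⋂ i, {x | 0 ≤ eval x (g i)} := by ext; simp [KS]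
  rw [this]
  exact isClosed_iInter fun i => isClosed_le continuous_const (MvPolynomial.continuous_eval _)

/-- Evaluation at a point where no denominator vanishes, as an algebra homomorphism. -/
def evalLoc {n : ℕ} (D : Submonoid (MvPolynomial (Fin n) ℝ)) (x : Fin n → ℝ)
    (hx : ∀ d : D, IsUnit (eval x (d : MvPolynomial (Fin n) ℝ))) : Localization D →ₐ[ℝ] ℝ :=
  { IsLocalization.lift (S := Localization D) (g := eval x) hx with
    commutes' := fun r => by
      change IsLocalization.lift (S := Localization D) (g := eval x) hx _ = _
      rw [IsScalarTower.algebraMap_apply ℝ (MvPolynomial (Fin n) ℝ) (Localization D),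
        IsLocalization.lift_eq, MvPolynomial.algebraMap_eq, eval_C]
      rfl }

lemma evalLoc_algebraMap {n : ℕ} (D : Submonoid (MvPolynomial (Fin n) ℝ)) (x : Fin n → ℝ)
    (hx : ∀ d : D, IsUnit (eval x (d : MvPolynomial (Fin n) ℝ))) (f : MvPolynomial (Fin n) ℝ) :
    evalLoc D x hx (algebraMap _ _ f) = eval x f :=
  IsLocalization.lift_eq hx f

lemma nonneg_of_mem_genPreordering {E : Type*} [CommRing E] {m : ℕ} (g : Fin m → E)
    (ρ : E →+* ℝ) (hg : ∀ i, 0 ≤ ρ (g i)) {t : E} (ht : t ∈ genPreordering g) : 0 ≤ ρ t := by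
  obtain ⟨σ, hσ, rfl⟩ := ht
  rw [map_sum]
  refine Finset.sum_nonneg fun ν _ => ?_
  rw [map_mul, map_prod]
  refine mul_nonneg ?_ (Finset.prod_nonneg fun j _ => ?_)
  · have hs := hσ ν
    generalize σ ν = s at hs
    induction hs with
    | zero => simp
    | sq_add a _ ih => rw [map_add, map_mul]; exact add_nonneg (mul_self_nonneg _) ih
  · split_ifs
    · exact hg j
    · simp

/-- Closure of `T_S^E` in the finest locally convex topology equals
`Pos^E(K_S \ ⋃_{d ∈ D} Z(d))`, under the growth condition on some `p ∈ D`. -/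
theorem closure_preordering_eq_pos_localization
    {n m : ℕ} (D : Submonoid (MvPolynomial (Fin n) ℝ))
    (hD0 : (0 : MvPolynomial (Fin n) ℝ) ∉ D)
    (g : Fin m → MvPolynomial (Fin n) ℝ)
    (hKne : (KS g).Nonempty)
    (p : MvPolynomial (Fin n) ℝ) (hpD : p ∈ D)
    (k : ℕ) (hk : 1 ≤ k)
    (hp1 : ∀ x ∈ KS g, 1 ≤ eval x p)
    (hpgrow : ∀ x ∈ KS g, ∑ i, (x i) ^ 2 ≤ (k : ℝ) * eval x p) :
    dualClosure (genPreordering fun i =>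
        algebraMap (MvPolynomial (Fin n) ℝ) (Localization D) (g i))
      = PosE D (KS g \ ⋃ d ∈ (D : Set (MvPolynomial (Fin n) ℝ)), Zset d) := by
  have hmk : ∀ (f : MvPolynomial (Fin n) ℝ) (d : D),
      Localization.mk f d * algebraMap _ (Localization D) (d : MvPolynomial (Fin n) ℝ)
        = algebraMap _ _ f := fun f d => by
    rw [Localization.mk_eq_mk']; exact IsLocalization.mk'_spec _ f d
  ext R
  constructor
  · intro hR
    obtain ⟨⟨f, d⟩, rfl⟩ : ∃ y : MvPolynomial (Fin n) ℝ × D, R = Localization.mk y.1 y.2 := by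
      induction R using Localization.induction_on with
      | _ y => exact ⟨y, rfl⟩
    refine ⟨f, d, rfl, ?_⟩
    rintro x ⟨hxK, hxZ⟩
    have hx : ∀ d : D, IsUnit (eval x (d : MvPolynomial (Fin n) ℝ)) := fun d => by
      refine isUnit_iff_ne_zero.2 fun h0 => hxZ ?_
      exact Set.mem_biUnion d.2 h0
    have h0 := hR (evalLoc D x hx).toLinearMap fun t ht =>
      nonneg_of_mem_genPreordering _ (evalLoc D x hx).toRingHom
        (fun i => by
          change 0 ≤ evalLoc D x hx _
          rw [evalLoc_algebraMap]; exact hxK i) ht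
    have h1 := congrArg (evalLoc D x hx) (hmk f d)
    rw [map_mul, evalLoc_algebraMap, evalLoc_algebraMap] at h1
    rw [← h1, mul_assoc]
    exact mul_nonneg h0 (mul_self_nonneg _)
  · rintro ⟨f, d, rfl, hfd⟩ L hL
    let φ := IsScalarTower.toAlgHom ℝ (MvPolynomial (Fin n) ℝ) (Localization D)
    have hDu : ∀ d ∈ D, IsUnit (φ d) := fun d hd =>
      IsLocalization.map_units (Localization D) (⟨d, hd⟩ : D)
    obtain ⟨u, hu⟩ := hDu d d.2
    let L' : Localization D →ₗ[ℝ] ℝ := L ∘ₗ LinearMap.mulRight ℝ ((↑u⁻¹ : Localization D) * ↑u⁻¹)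
    have hL' : ∀ h : MvPolynomial (Fin n) ℝ, (∀ x ∈ KS g, 0 ≤ eval x h) →
        ∀ e, 0 ≤ L' (φ h * (e * e)) := fun h hh e => by
      have := functional_nonneg (φ : MvPolynomial (Fin n) ℝ →+* Localization D) g p (hDu p hpD) k
        hp1 hpgrow L.toAddMonoidHom hL h hh (e * ↑u⁻¹)
      change 0 ≤ L (φ h * (e * e) * (↑u⁻¹ * ↑u⁻¹))
      rw [mul_assoc, mul_mul_mul_comm e e]
      exact this
    have h0 := functional_nonneg_off_zeros hDu (isClosed_KS g) L' hL' (f * d) fun x hx hxD => by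
      rw [map_mul]
      refine hfd x ⟨hx, fun hmem => ?_⟩
      obtain ⟨d', hd', hz⟩ := Set.mem_iUnion₂.1 hmem
      exact hxD d' hd' hz
    have h1 : φ (f * d) * ((↑u⁻¹ : Localization D) * ↑u⁻¹) = Localization.mk f d := by
      have h2 : Localization.mk f d * φ d = φ f := hmk f d
      have h3 := u.mul_inv
      rw [map_mul, ← h2, ← hu]
      linear_combination (Localization.mk f d * ((u : Localization D) * ↑u⁻¹ + 1)) * h3
    rw [← h1]
    exact h0

end
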